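/- Among the 191 conjugacy classes of torsion-free genus-zero subgroups of PSL(2,ℤ) of index 24, classified by the number of loops of the associated dessin, i.e. the number of left cosets of Γ̄ fixed by T: exactly 20 classes have no T-fixed coset, exactly 45 have exactly one, exactly 71 have exactly two, exactly 40 have exactly three, exactly 14 have exactly four, and exactly 1 has exactly five. -/

import Mathlib

open Matrix

/-- `SL(2,ℤ)`: the group of 2×2 integer matrices of determinant 1. -/
abbrev SL2Z := Matrix.SpecialLinearGroup (Fin 2) ℤ

instance : Fact (Even (Fintype.card (Fin 2))) := ⟨by simp⟩

/-- The subgroup `{±I}` of `SL(2,ℤ)`. -/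
def pmOne : Subgroup SL2Z := Subgroup.zpowers (-1 : SL2Z)

instance : pmOne.Normal := by
  constructor
  intro x hx g
  obtain ⟨n, rfl⟩ := hx
  have h : Commute ((-1 : SL2Z) ^ n) g := (Commute.neg_one_left g).zpow_left n
  refine ⟨n, ?_⟩
  rw [← h.eq, mul_assoc, mul_inv_cancel, mul_one]

/-- `PSL(2,ℤ)`, the modular group, as the quotient of `SL(2,ℤ)` by `{±I}`. -/
abbrev PSL2Z := SL2Z ⧸ pmOne

/-- The natural projection `ξ : SL(2,ℤ) → PSL(2,ℤ)`. -/
def xi : SL2Z →* PSL2Z := QuotientGroup.mk' pmOne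

/-- The element `S` of `PSL(2,ℤ)`, the image of `[[0,-1],[1,0]]`. -/
def Sp : PSL2Z := xi ⟨!![0, -1; 1, 0], by norm_num [Matrix.det_fin_two_of]⟩

/-- The element `T` of `PSL(2,ℤ)`, the image of `[[1,1],[0,1]]`. -/
def Tp : PSL2Z := xi ⟨!![1, 1; 0, 1], by norm_num [Matrix.det_fin_two_of]⟩

/-- The number of left cosets in `PSL(2,ℤ)/Γ` fixed by `g` (for the
left-multiplication action).  For `g = S` this is `e₂(Γ)`, for `g = S*T` it is `e₃(Γ)`. -/
noncomputable def nFix (g : PSL2Z) (Γ : Subgroup PSL2Z) : ℕ :=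
  Nat.card {x : PSL2Z ⧸ Γ // g • x = x}

/-- The number of orbits of the cyclic subgroup generated by `g` on `PSL(2,ℤ)/Γ`.
For `g = S, S*T, T` these are `c₂(Γ), c₃(Γ), h(Γ)` respectively. -/
noncomputable def nOrb (g : PSL2Z) (Γ : Subgroup PSL2Z) : ℕ :=
  Nat.card (MulAction.orbitRel.Quotient (Subgroup.zpowers g) (PSL2Z ⧸ Γ))

/-- `Γ` has genus zero: `c₂(Γ) + c₃(Γ) + h(Γ) = index(Γ) + 2`. -/
def GenusZero (Γ : Subgroup PSL2Z) : Prop :=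
  nOrb Sp Γ + nOrb (Sp * Tp) Γ + nOrb Tp Γ = Γ.index + 2

/-- `Γ` is torsion free: it contains no nontrivial element of finite order. -/
def TorsionFree (Γ : Subgroup PSL2Z) : Prop :=
  ∀ x ∈ Γ, x ≠ 1 → ¬ IsOfFinOrder x

/-- Two subgroups of a group are conjugate. -/
def SubgroupConj {G : Type*} [Group G] (H K : Subgroup G) : Prop :=
  ∃ g : G, Subgroup.map (MulAut.conj g).toMonoidHom H = K

/-- The number of conjugacy classes of subgroups of `PSL(2,ℤ)` satisfying `P`. -/
noncomputable def countClasses (P : Subgroup PSL2Z → Prop) : ℕ :=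
  Nat.card (Quot fun A B : {Γ : Subgroup PSL2Z // P Γ} => SubgroupConj A.1 B.1)

/-- The index of the torsion free subgroup `Γ^tf` associated to `Γ`:
`index(Γ) + 3·e₂(Γ) + 2·e₃(Γ)`. -/
noncomputable def tfIdx (Γ : Subgroup PSL2Z) : ℕ :=
  Γ.index + 3 * nFix Sp Γ + 2 * nFix (Sp * Tp) Γ


def dig (T x : ℕ) : ℕ := Nat.land (Nat.shiftRight T (Nat.mul 5 x)) 31

def u0 (d : ℕ) : ℕ := dig 903077639307732265342198557984292929 d

/-- forces evaluation of a natural number before going on -/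
def force (n : ℕ) (k : ℕ → Bool) : Bool :=
  Nat.rec (motive := fun _ => Bool) (k 0) (fun m _ => k (Nat.succ m)) n

def putAt (x y : ℕ) : ℕ := Nat.shiftLeft y (Nat.mul 5 x)

/-- packed description of the three labels of the vertex of the dart `e`, read from `e` on -/
def phiBlock (m e e1 e2 : ℕ) : ℕ :=
  Nat.add (putAt m e) (Nat.add (putAt (Nat.add m 1) e1) (putAt (Nat.add m 2) e2))

def psiBlock (m e e1 e2 : ℕ) : ℕ :=
  Nat.add (putAt e (Nat.add m 1)) (Nat.add (putAt e1 (Nat.add m 2)) (putAt e2 (Nat.add m 3)))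

/-- add the vertex of `e` to the partial relabelling `phi`, `psi` (next label `m`) and go on -/
def addVert (m e phi psi : ℕ) (go : ℕ → ℕ → Bool) : Bool :=
  force (u0 e) fun e1 => force (u0 e1) fun e2 =>
  force (Nat.add phi (phiBlock m e e1 e2)) fun phi1 =>
  force (Nat.add psi (psiBlock m e e1 e2)) fun psi1 =>
  go phi1 psi1

/-- comparison of the table `T` rooted at another dart with `T` itself; the answer `false` means
that the rerooted table is smaller -/
def cmpGo (T : ℕ) (fuel : ℕ) : ℕ → ℕ → ℕ → ℕ → Bool :=
  Nat.rec (motive := fun _ => ℕ → ℕ → ℕ → ℕ → Bool) (fun _ _ _ _ => true)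
    (fun _ ih x k phi psi =>
      force (dig T (dig phi x)) fun y1 =>
      force (dig psi (Nat.pred y1)) fun v1 =>
      force (dig T x) fun w1 =>
      Bool.rec (motive := fun _ => Bool)
        (Bool.rec (motive := fun _ => Bool)
          (Bool.rec (motive := fun _ => Bool)
            (Nat.ble w1 v1)
            (ih (Nat.succ x) k phi psi)
            (Nat.beq v1 w1))
          (Bool.rec (motive := fun _ => Bool)
            (Nat.ble w1 (Nat.succ (Nat.mul 3 k)))
            (addVert (Nat.mul 3 k) (Nat.pred y1) phi psi (ih (Nat.succ x) (Nat.succ k)))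
            (Nat.beq (Nat.succ (Nat.mul 3 k)) w1))
          (Nat.beq v1 0))
        true
        (Nat.beq y1 0))
    fuel

def cmpRoot (T d : ℕ) : Bool := addVert 0 d 0 0 (cmpGo T 24 0 1)

/-- conjunction of `f 0, …, f (n-1)` -/
def allBelow (f : ℕ → Bool) (n : ℕ) : Bool :=
  Nat.rec (motive := fun _ => Bool) true
    (fun m ih => Bool.rec (motive := fun _ => Bool) false ih (f m)) n

def isMin (T : ℕ) : Bool := allBelow (cmpRoot T) 24

/-- the face permutation -/
def pf (T d : ℕ) : ℕ := Nat.pred (dig T (u0 d))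

def walk (T d fuel : ℕ) : ℕ → Bool :=
  Nat.rec (motive := fun _ => ℕ → Bool) (fun _ => true)
    (fun _ ih e => force e fun e =>
      Bool.rec (motive := fun _ => Bool)
        (Bool.rec (motive := fun _ => Bool) false (ih (pf T e)) (Nat.ble d e))
        true (Nat.beq d e)) fuel

def countBelow (f : ℕ → Bool) (n : ℕ) : ℕ :=
  Nat.rec (motive := fun _ => ℕ) 0
    (fun m ih => Bool.rec (motive := fun _ => ℕ) ih (Nat.succ ih) (f m)) n

def faces (T : ℕ) : ℕ := countBelow (fun d => walk T d 24 (pf T d)) 24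

def loops (T : ℕ) : ℕ := countBelow (fun d => Nat.beq (pf T d) d) 24

def elemL (T : ℕ) (l : List ℕ) : Bool :=
  List.rec (motive := fun _ => Bool) false
    (fun a _ ih => Bool.rec (motive := fun _ => Bool) ih true (Nat.beq T a)) l

def leaf (l : List ℕ) (T : ℕ) : Bool :=
  Bool.rec (motive := fun _ => Bool) true (elemL T l) (isMin T)

/-- go around the open face at the dart `x`, starting at `e`, and test all free darts -/
def around (T x : ℕ) (child : ℕ → Bool) (fuel : ℕ) : ℕ → Bool :=
  Nat.rec (motive := fun _ => ℕ → Bool) (fun _ => false)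
    (fun _ ih e => force (u0 e) fun y => force (dig T y) fun z1 =>
      Bool.rec (motive := fun _ => Bool)
        (Bool.rec (motive := fun _ => Bool)
          (ih (Nat.pred z1))
          (Bool.rec (motive := fun _ => Bool) false (ih y) (child y))
          (Nat.beq z1 0))
        true
        (Nat.beq y x)) fuel

/-- the table with the darts `x` and `y` joined -/
def join (T x y : ℕ) : ℕ := Nat.add T (Nat.add (putAt x (Nat.succ y)) (putAt y (Nat.succ x)))

/-- exhaustive search over canonical planar tables; `fuel` counts the darts still to be treated -/
def search (l : List ℕ) (fuel : ℕ) : ℕ → ℕ → ℕ → Bool :=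
  Nat.rec (motive := fun _ => ℕ → ℕ → ℕ → Bool) (fun _ _ T => leaf l T)
    (fun _ ih x k T =>
      Bool.rec (motive := fun _ => Bool)
        (ih (Nat.succ x) k T)
        (Bool.rec (motive := fun _ => Bool)
          true
          (Bool.rec (motive := fun _ => Bool)
            true
            (Bool.rec (motive := fun _ => Bool)
              false
              (Bool.rec (motive := fun _ => Bool)
                (force (join T x (Nat.mul 3 k)) (ih (Nat.succ x) (Nat.succ k)))
                true
                (Nat.beq k 8))
              (around T x (fun y => force (join T x y) (ih (Nat.succ x) k)) 24 x))
            (Bool.rec (motive := fun _ => Bool) true (isMin T) (Nat.beq k 6)))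
          (Nat.ble (Nat.succ x) (Nat.mul 3 k)))
        (Nat.beq (dig T x) 0)) fuel

def repList : List ℕ := [
  987416887533887081349214534921981986,
  987371410607289519847103974285086754,
  987292776694679738719710515504975906,
  858787351239987210998291611782320162,
  987416887533844727660850094810435618,
  987371410607247166158739534173540386,
  987292776694637385031346075393429538,
  858787351239944857309927171670773794,
  987416887533771494122906264909484066,
  987371410607173932620795704272588834,
  987292776694564151493402245492477986,
  858787351239871623771983341769822242,
  987292774212645420569648431715422242,
  987416845212911340512150775284207650,
  987370140212318107504754010300190754,
  987252209093624550857860649304821794,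
  858746783638932023136441745582166050,
  987416883815119362337121665423609890,
  987371406888521800835011104786714658,
  987292772975912019707617646006603810,
  858787347521219491986198742283948066,
  987252207894368994102015938004095010,
  987367603785610111061460837484040226,
  987286276272635201496490990921420834,
  987245750992555754471704884359041058,
  774361778017776612273471053083283490,
  987171078328494658963680769126535202,
  858665652873802131242261865403879458,
  987167156654133859020818176996904994,
  734050290707789158965209348690776098,
  730152384070388003635117777421963298,
  987371410607289519847064529338994722,
  987292776694679738719671070558883874,
  858787351239987210998252166836228130,
  987371410607247166158700089227448354,
  987292776694637385031306630447337506,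
  858787351239944857309887726724681762,
  987371410607173932620756259326496802,
  987292776694564151493362800546385954,
  858787351239871623771943896823730210,
  987292774212645420569608986769330210,
  987416845212911340512111330338115618,
  987370140212318107504714565354098722,
  987252209093624550857821204358729762,
  858746783638932023136402300636074018,
  987416883815119362337082220477517858,
  987371406888521800834971659840622626,
  987292772975912019707578201060511778,
  858787347521219491986159297337856034,
  987252207894368994101976493058002978,
  987286276272635201496451545975328802,
  987245750992555754471665439412949026,
  774361778017776612273431608137191458,
  987171078328494658963641324180443170,
  858665652873802131242222420457787426,
  987167156654133859020778732050812962,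
  734050290707789158965169903744684066,
  730152384070388003635078332475871266,
  987292776694679738719602866511777826,
  858787351239987210998183962789122082,
  987292776694637385031238426400231458,
  858787351239944857309819522677575714,
  987292776694564151493294596499279906,
  858787351239871623771875692776624162,
  987292774212645420569540782722224162,
  987416845212911340512043126291009570,
  987370140212318107504646361306992674,
  987252209093624550857753000311623714,
  858746783638932023136334096588967970,
  987416883815119362337014016430411810,
  987371406888521800834903455793516578,
  987292772975912019707509997013405730,
  858787347521219491986091093290749986,
  987252207894368994101908289010896930,
  987286276272635201496383341928222754,
  987245750992555754471597235365842978,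
  774361778017776612273363404090085410,
  858665652873802131242154216410681378,
  987167156654133859020710528003706914,
  734050290707789158965101699697578018,
  730152384070388003635010128428765218,
  858787351239871621460408750306332706,
  858665652873802128930687273940389922,
  858787351239987171583811524586737698,
  858787351239943674162411617370869794,
  987292774212607639046987740552990754,
  987416845212873558989490084121776162,
  987370140212280325982093319137759266,
  987252209093586769335199958142390306,
  858746783638894241613781054419734562,
  987416883815081580814460974261178402,
  987371406888484019312350413624283170,
  987292772975874238184956954844172322,
  858787347521181710463538051121516578,
  987252207894331212579355246841663522,
  987286276272597419973830299758989346,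
  987245750992517972949044193196609570,
  774361778017738830750810361920852002,
  858665652873764349719601174241447970,
  987167156654096077498157485834473506,
  734050290707751377442548657528344610,
  730152384070350222112457086259531810,
  858787351239987207534919285315047458,
  858787351239944853846554845203501090,
  858787351239871620308611015302549538,
  987292774212645417106276105248149538,
  987416845212911337048778448816934946,
  987252209093624547394488322837549090,
  858746783638932019673069419114893346,
  987371406888521797371638778319441954,
  987292772975912016244245319539331106,
  858787347521219488522826415816675362,
  987252207894368990638643611536822306,
  987286276272635198033118664454148130,
  987245750992555751008332557891768354,
  774361778017776608810098726616010786,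
  987167156654133855557445850529632290,
  734050290707789155501837022223503394,
  730152384070388000171745450954690594,
  858787351239865569782188736150343714,
  858787351239827827674008132183494690,
  987416843897550497433423214313312290,
  987370138896957264426026449329295394,
  858746782323571180057714184611270690,
  987292770498775714518037237727334434,
  858787345044083186796618334004678690,
  987252205379754844806249455316733986,
  987416722770436963894784628240781346,
  774360507891244429881573497306714146,
  858625085578661730040785341835743266,
  734009723412648757763732825122639906,
  730111816775247602433641253853827106,
  987171075852500945099775230172303394,
  730152381594394289771212238467731490,
  858787351239754630992398852287467554,
  987130511033281061080594965662371874,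
  858625085578588533359176061939716130,
  987292774208905118321357711918338082,
  987292772970957073185078244092776482,
  987284926906997601108953155647934498,
  987416845096740900147337294727188514,
  987370140096147667139940529743171618,
  858746783522761582771628265025146914,
  858665652634321478745771484598341666,
  987252205263628200539411184346042402,
  858746779808935672817992280623386658,
  987416722534630315941424663465398306,
  987366333423271280716203316932087842,
  987244361675546593280642612477399074,
  987163311262879010407296593489399842,
  732741002883995702680773570688290850,
  858625085342855082087425377060360226,
  650932933708946070260442114240385058,
  987416880101185645906809513428750370,
  858787343807285775555886590289088546,
  774361774303842895843158901088423970,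
  734050286993855442534897196695916578,
  730152380356454287204805625427103778,
  987130509795342202247223819726065698,
  987126588120981402304361227596435490,
  987282469606892647169295348327878690,
  730141961853083956844518832883208226,
  774236276885953467215708506926714914,
  649621152013953262137488569294491682,
  645726731421747363536324259833024546,
  733928592536224198748082592306794530,
  858543954582557167338613415215206434,
  609313467920511877103074496838996002,
  605415561283110721772982925570183202,
  609313348965841546257269745509306402,
  601517416736368904751281851641991202,
  858543954582557167338613413062417572,
  858787351239944857309927134963211460,
  858746783638932023136441708874603716,
  858787347521219491986198705576385732,
  774361778017776612273471016375721156,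
  734050290707789158965209311983213764,
  858746783638894241613745867634810052,
  858787347521181710463502864336592068,
  774361778017738830750775175135927492,
  734050290707751377442513470743420100,
  858746782323571180057678997826346180,
  734009723412648757763697638337715396,
  858746783522761582771593078240222404,
  732741002883995702680738383903366340,
  858625085342855082087390190275435716,
  609313467920511877103039310054071492,
  601517416736368904751246664857066692,
  734050290707751377334356503913605348,
  734009722174631977216033062729591012,
  732737196102204348980808771861260516]

set_option linter.unusedSimpArgs false
set_option linter.flexible false
/-! ### The modular group -/

/-- `U = S T`, of order three -/
def Up : PSL2Z := Sp * Tp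

def Sm : SL2Z := ⟨!![0, -1; 1, 0], by norm_num [Matrix.det_fin_two_of]⟩
def Tm : SL2Z := ⟨!![1, 1; 0, 1], by norm_num [Matrix.det_fin_two_of]⟩
def Um : SL2Z := ⟨!![0, -1; 1, 1], by norm_num [Matrix.det_fin_two_of]⟩

lemma xi_Sm : xi Sm = Sp := rfl
lemma xi_Tm : xi Tm = Tp := rfl

lemma Sm_00 : Sm.1 0 0 = 0 := rfl
lemma Sm_01 : Sm.1 0 1 = -1 := rfl
lemma Sm_10 : Sm.1 1 0 = 1 := rfl
lemma Sm_11 : Sm.1 1 1 = 0 := rfl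
lemma Tm_00 : Tm.1 0 0 = 1 := rfl
lemma Tm_01 : Tm.1 0 1 = 1 := rfl
lemma Tm_10 : Tm.1 1 0 = 0 := rfl
lemma Tm_11 : Tm.1 1 1 = 1 := rfl
lemma Um_00 : Um.1 0 0 = 0 := rfl
lemma Um_01 : Um.1 0 1 = -1 := rfl
lemma Um_10 : Um.1 1 0 = 1 := rfl
lemma Um_11 : Um.1 1 1 = 1 := rfl

lemma mul_ent (A B : SL2Z) (i j : Fin 2) :
    (A * B).1 i j = A.1 i 0 * B.1 0 j + A.1 i 1 * B.1 1 j := by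
  rw [Matrix.SpecialLinearGroup.coe_mul, Matrix.mul_apply, Fin.sum_univ_two]

lemma SL_ext (A B : SL2Z) (h0 : A.1 0 0 = B.1 0 0) (h1 : A.1 0 1 = B.1 0 1)
    (h2 : A.1 1 0 = B.1 1 0) (h3 : A.1 1 1 = B.1 1 1) : A = B := by
  ext i j
  fin_cases i <;> fin_cases j <;> assumption

lemma one_ent (i j : Fin 2) : (1 : SL2Z).1 i j = if i = j then 1 else 0 := by
  rw [Matrix.SpecialLinearGroup.coe_one, Matrix.one_apply]

lemma neg_ent (A : SL2Z) (i j : Fin 2) : (-A).1 i j = - A.1 i j := by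
  rw [Matrix.SpecialLinearGroup.coe_neg, Matrix.neg_apply]

lemma Sm_mul_Tm : Sm * Tm = Um := by
  apply SL_ext <;> simp [mul_ent, neg_ent, one_ent, Sm_00, Sm_01, Sm_10, Sm_11, Tm_00, Tm_01, Tm_10, Tm_11, Um_00, Um_01, Um_10, Um_11]

lemma xi_Um : xi Um = Up := by
  rw [← Sm_mul_Tm, map_mul, xi_Sm, xi_Tm, Up]

lemma mem_pmOne (g : SL2Z) : g ∈ pmOne ↔ g = 1 ∨ g = -1 := by
  constructor
  · rintro ⟨n, rfl⟩
    rcases Int.even_or_odd n with h | h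
    · left; exact h.neg_one_zpow
    · right; exact h.neg_one_zpow
  · rintro (rfl | rfl)
    · exact one_mem _
    · exact Subgroup.mem_zpowers _

lemma xi_eq_one (g : SL2Z) : xi g = 1 ↔ g = 1 ∨ g = -1 := by
  rw [← mem_pmOne]; exact QuotientGroup.eq_one_iff g

lemma xi_eq (g h : SL2Z) : xi g = xi h ↔ h = g ∨ h = -g := by
  rw [← inv_mul_eq_one, ← map_inv, ← map_mul, xi_eq_one]
  constructor
  · rintro (h1 | h1)
    · left; exact (inv_mul_eq_one.mp h1).symm
    · right
      rw [inv_mul_eq_iff_eq_mul] at h1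
      rw [h1]; simp
  · rintro (rfl | rfl)
    · left; simp
    · right; simp

lemma xi_neg (g : SL2Z) : xi (-g) = xi g := (xi_eq _ _).2 (Or.inr (by simp))

lemma xi_surj : Function.Surjective xi := QuotientGroup.mk'_surjective _

lemma Sp_sq : Sp * Sp = 1 := by
  rw [← xi_Sm, ← map_mul, xi_eq_one]
  right
  apply SL_ext <;> simp [mul_ent, neg_ent, one_ent, Sm_00, Sm_01, Sm_10, Sm_11, Tm_00, Tm_01, Tm_10, Tm_11, Um_00, Um_01, Um_10, Um_11]

lemma Up_cube : Up * Up * Up = 1 := by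
  rw [← xi_Um, ← map_mul, ← map_mul, xi_eq_one]
  right
  apply SL_ext <;> simp [mul_ent, neg_ent, one_ent, Sm_00, Sm_01, Sm_10, Sm_11, Tm_00, Tm_01, Tm_10, Tm_11, Um_00, Um_01, Um_10, Um_11]

lemma Sp_ne : Sp ≠ 1 := by
  rw [← xi_Sm, Ne, xi_eq_one]
  rintro (h | h)
  · have := congrArg (fun g : SL2Z => g.1 0 0) h
    simp [Sm] at this
  · have := congrArg (fun g : SL2Z => g.1 0 0) h
    simp [Sm] at this

lemma Up_ne : Up ≠ 1 := by
  rw [← xi_Um, Ne, xi_eq_one]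
  rintro (h | h)
  · have := congrArg (fun g : SL2Z => g.1 0 0) h
    simp [Um] at this
  · have := congrArg (fun g : SL2Z => g.1 0 0) h
    simp [Um] at this

lemma Tp_eq : Tp = Sp * Up := by
  rw [Up, ← mul_assoc, Sp_sq, one_mul]

lemma closure_Sp_Up : Subgroup.closure {Sp, Up} = ⊤ := by
  have h1 : Subgroup.closure {Sp, Tp} = ⊤ := by
    have h := SpecialLinearGroup.SL2Z_generators
    have h2 := congrArg (Subgroup.map xi) h
    rw [MonoidHom.map_closure, Set.image_pair,
      Subgroup.map_top_of_surjective xi xi_surj] at h2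
    exact h2
  rw [eq_top_iff, ← h1, Subgroup.closure_le]
  rintro x (rfl | rfl)
  · exact Subgroup.subset_closure (by simp)
  · rw [Tp_eq]
    exact mul_mem (Subgroup.subset_closure (by simp)) (Subgroup.subset_closure (by simp))

section hom

/-- the homomorphism from a finite cyclic group -/
noncomputable def homZ {K : Type*} [Group K] (n : ℕ) (c : K) (h : c ^ n = 1) :
    Multiplicative (ZMod n) →* K :=
  AddMonoidHom.toMultiplicativeLeft
    (ZMod.lift n ⟨zmultiplesHom (Additive K) (Additive.ofMul c), by
      simp only [zmultiplesHom_apply, natCast_zsmul]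
      rw [← ofMul_pow, h, ofMul_one]⟩)

lemma homZ_one {K : Type*} [Group K] (n : ℕ) (c : K) (h : c ^ n = 1) :
    homZ n c h (Multiplicative.ofAdd 1) = c := by
  have : ((1 : ℤ) : ZMod n) = 1 := by simp
  simp only [homZ, AddMonoidHom.toMultiplicativeLeft_apply_apply, toAdd_ofAdd]
  rw [← this, ZMod.lift_coe]
  simp

abbrev cyc (i : Bool) : ℕ := if i then 3 else 2

abbrev HH (i : Bool) : Type := Multiplicative (ZMod (cyc i))

noncomputable def hf {K : Type*} [Group K] (a b : K) (ha : a * a = 1) (hb : b * b * b = 1)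
    (i : Bool) : HH i →* K :=
  match i with
  | false => homZ 2 a (by rw [pow_two, ha])
  | true => homZ 3 b (by rw [pow_succ, pow_two, hb])

lemma hf_false {K : Type*} [Group K] (a b : K) (ha : a * a = 1) (hb : b * b * b = 1) :
    hf a b ha hb false (Multiplicative.ofAdd (1 : ZMod 2)) = a :=
  homZ_one 2 a (by rw [pow_two, ha])

lemma hf_true {K : Type*} [Group K] (a b : K) (ha : a * a = 1) (hb : b * b * b = 1) :
    hf a b ha hb true (Multiplicative.ofAdd (1 : ZMod 3)) = b :=
  homZ_one 3 b (by rw [pow_succ, pow_two, hb])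

def XX (i : Bool) : Set PSL2Z :=
  match i with
  | false => {p | ∃ g : SL2Z, xi g = p ∧ 0 < g.1 0 0 * g.1 1 0}
  | true => {p | ∃ g : SL2Z, xi g = p ∧ g.1 0 0 * g.1 1 0 < 0}

lemma hf_pp_false (h : HH false) (hh : h ≠ 1) : hf Sp Up Sp_sq Up_cube false h = Sp := by
  have : ∀ h : Multiplicative (ZMod 2), h ≠ 1 → h = Multiplicative.ofAdd 1 := by decide
  rw [this h hh]
  exact hf_false _ _ _ _

lemma hf_pp_true (h : HH true) (hh : h ≠ 1) :
    hf Sp Up Sp_sq Up_cube true h = Up ∨ hf Sp Up Sp_sq Up_cube true h = Up * Up := by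
  have : ∀ h : Multiplicative (ZMod 3), h ≠ 1 → h = Multiplicative.ofAdd 1 ∨
    h = Multiplicative.ofAdd 1 * Multiplicative.ofAdd 1 := by decide
  rcases this h hh with rfl | rfl
  · left; exact hf_true _ _ _ _
  · right
    rw [map_mul]
    exact congrArg₂ (· * ·) (hf_true _ _ Sp_sq Up_cube) (hf_true _ _ Sp_sq Up_cube)

lemma lift_inj : Function.Injective (Monoid.CoprodI.lift (hf Sp Up Sp_sq Up_cube)) := by
  refine Monoid.CoprodI.lift_injective_of_ping_pong (α := PSL2Z) _ ?_ XX ?_ ?_ ?_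
  · right
    refine ⟨true, ?_⟩
    have : Cardinal.mk (HH true) = 3 := by
      change Cardinal.mk (Multiplicative (ZMod 3)) = 3
      rw [Cardinal.mk_fintype]
      simp
    exact this.ge
  · intro i
    match i with
    | false =>
      refine ⟨xi ⟨!![1, 0; 1, 1], by norm_num [Matrix.det_fin_two_of]⟩, _, rfl, ?_⟩
      simp
    | true =>
      refine ⟨xi ⟨!![1, 0; -1, 1], by norm_num [Matrix.det_fin_two_of]⟩, _, rfl, ?_⟩
      simp
  · have key : Disjoint (XX false) (XX true) := by
      rw [Set.disjoint_left]
      rintro p ⟨g, rfl, hg⟩ ⟨g', h', hg'⟩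
      rw [xi_eq] at h'
      rcases h' with rfl | rfl
      · exact absurd hg hg'.not_gt
      · simp at hg
        exact absurd hg hg'.not_gt
    intro i j hij
    match i, j with
    | false, false => exact absurd rfl hij
    | true, true => exact absurd rfl hij
    | false, true => exact key
    | true, false => exact key.symm
  · intro i j hij h hh
    match i, j with
    | false, false => exact absurd rfl hij
    | true, true => exact absurd rfl hij
    | false, true =>
      rw [hf_pp_false h hh]
      rintro _ ⟨_, ⟨g, rfl, hg⟩, rfl⟩
      refine ⟨Sm * g, by simp [xi_Sm], ?_⟩
      simp only [mul_ent, neg_ent, one_ent, Sm_00, Sm_01, Sm_10, Sm_11, Tm_00, Tm_01, Tm_10, Tm_11, Um_00, Um_01, Um_10, Um_11]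
      nlinarith
    | true, false =>
      rcases hf_pp_true h hh with h1 | h1
      · rw [h1]
        rintro _ ⟨_, ⟨g, rfl, hg⟩, rfl⟩
        refine ⟨Um * g, by simp [xi_Um], ?_⟩
        simp only [mul_ent, neg_ent, one_ent, Sm_00, Sm_01, Sm_10, Sm_11, Tm_00, Tm_01, Tm_10, Tm_11, Um_00, Um_01, Um_10, Um_11]
        nlinarith [sq_nonneg (g.1 1 0)]
      · rw [h1]
        rintro _ ⟨_, ⟨g, rfl, hg⟩, rfl⟩
        refine ⟨Um * Um * g, by simp [xi_Um], ?_⟩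
        simp only [mul_ent, neg_ent, one_ent, Sm_00, Sm_01, Sm_10, Sm_11, Tm_00, Tm_01, Tm_10, Tm_11, Um_00, Um_01, Um_10, Um_11]
        nlinarith [sq_nonneg (g.1 0 0)]

lemma lift_surj : Function.Surjective (Monoid.CoprodI.lift (hf Sp Up Sp_sq Up_cube)) := by
  rw [← MonoidHom.range_eq_top, eq_top_iff, ← closure_Sp_Up, Subgroup.closure_le]
  rintro x (rfl | rfl)
  · refine ⟨Monoid.CoprodI.of (M := HH) (i := false) (Multiplicative.ofAdd (1 : ZMod 2)), ?_⟩
    rw [Monoid.CoprodI.lift_of]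
    exact hf_false _ _ _ _
  · refine ⟨Monoid.CoprodI.of (M := HH) (i := true) (Multiplicative.ofAdd (1 : ZMod 3)), ?_⟩
    rw [Monoid.CoprodI.lift_of]
    exact hf_true _ _ _ _

lemma hom_transfer {A B K : Type*} [Monoid A] [Monoid B] [Monoid K] (f : A →* B)
    (hf : Function.Bijective f) (g : A →* K) : ∃ F : B →* K, ∀ a, F (f a) = g a := by
  refine ⟨g.comp (MulEquiv.ofBijective f hf).symm.toMonoidHom, fun a => ?_⟩
  have : (MulEquiv.ofBijective f hf).symm (f a) = a := by
    rw [MulEquiv.symm_apply_eq]; rfl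
  simp [this]

theorem exists_hom {K : Type*} [Group K] (a b : K) (ha : a * a = 1) (hb : b * b * b = 1) :
    ∃ F : PSL2Z →* K, F Sp = a ∧ F Up = b := by
  obtain ⟨F, hF⟩ := hom_transfer (Monoid.CoprodI.lift (hf Sp Up Sp_sq Up_cube))
    ⟨lift_inj, lift_surj⟩ (Monoid.CoprodI.lift (hf a b ha hb))
  refine ⟨F, ?_, ?_⟩
  · have h := hF (Monoid.CoprodI.of (M := HH) (i := false) (Multiplicative.ofAdd (1 : ZMod 2)))
    rw [Monoid.CoprodI.lift_of, Monoid.CoprodI.lift_of, hf_false, hf_false] at h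
    exact h
  · have h := hF (Monoid.CoprodI.of (M := HH) (i := true) (Multiplicative.ofAdd (1 : ZMod 3)))
    rw [Monoid.CoprodI.lift_of, Monoid.CoprodI.lift_of, hf_true, hf_true] at h
    exact h

end hom

set_option linter.unusedSimpArgs false
/-! ### Elements of finite order -/

def Pseq (t : ℤ) : ℕ → ℤ
  | 0 => 0
  | 1 => 1
  | (n + 2) => t * Pseq t (n + 1) - Pseq t n

lemma Pseq_grow (t : ℤ) (ht : 2 ≤ |t|) (n : ℕ) : |Pseq t n| + 1 ≤ |Pseq t (n + 1)| := by
  induction n with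
  | zero => simp [Pseq]
  | succ n ih =>
    rw [Pseq]
    have h1 : |t * Pseq t (n + 1)| - |Pseq t n| ≤ |t * Pseq t (n + 1) - Pseq t n| :=
      abs_sub_abs_le_abs_sub _ _
    rw [abs_mul] at h1
    nlinarith [abs_nonneg (Pseq t (n + 1))]

lemma Pseq_pos (t : ℤ) (ht : 2 ≤ |t|) (n : ℕ) (hn : 0 < n) : Pseq t n ≠ 0 := by
  obtain ⟨m, rfl⟩ : ∃ m, n = m + 1 := ⟨n - 1, by omega⟩
  have := Pseq_grow t ht m
  intro h
  rw [h] at this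
  have h2 := abs_nonneg (Pseq t m)
  simp at this
  omega

lemma det_ent (M : SL2Z) : M.1 0 0 * M.1 1 1 - M.1 0 1 * M.1 1 0 = 1 := by
  have := M.2
  rwa [Matrix.det_fin_two] at this

lemma pow_ent (M : SL2Z) (n : ℕ) :
    (M ^ (n + 1)).1 0 0 = Pseq (M.1 0 0 + M.1 1 1) (n + 1) * M.1 0 0 - Pseq (M.1 0 0 + M.1 1 1) n ∧
    (M ^ (n + 1)).1 0 1 = Pseq (M.1 0 0 + M.1 1 1) (n + 1) * M.1 0 1 ∧
    (M ^ (n + 1)).1 1 0 = Pseq (M.1 0 0 + M.1 1 1) (n + 1) * M.1 1 0 ∧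
    (M ^ (n + 1)).1 1 1 =
      Pseq (M.1 0 0 + M.1 1 1) (n + 1) * M.1 1 1 - Pseq (M.1 0 0 + M.1 1 1) n := by
  induction n with
  | zero => simp [Pseq]
  | succ n ih =>
    have hd := det_ent M
    obtain ⟨h1, h2, h3, h4⟩ := ih
    rw [pow_succ]
    simp only [mul_ent, h1, h2, h3, h4, Pseq]
    refine ⟨?_, ?_, ?_, ?_⟩
    · linear_combination (-Pseq (M.1 0 0 + M.1 1 1) (n + 1)) * hd
    · ring
    · ring
    · linear_combination (-Pseq (M.1 0 0 + M.1 1 1) (n + 1)) * hd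

lemma trace_small (M : SL2Z) (hM : xi M ≠ 1) (hf : IsOfFinOrder (xi M)) :
    |M.1 0 0 + M.1 1 1| ≤ 1 := by
  by_contra hcon
  have ht : 2 ≤ |M.1 0 0 + M.1 1 1| := by omega
  obtain ⟨n, hn, hx⟩ := isOfFinOrder_iff_pow_eq_one.1 hf
  obtain ⟨m, rfl⟩ : ∃ m, n = m + 1 := ⟨n - 1, by omega⟩
  rw [← map_pow, xi_eq_one] at hx
  have hP := Pseq_pos _ ht (m + 1) hn
  obtain ⟨h1, h2, h3, h4⟩ := pow_ent M m
  have key : (M ^ (m + 1)).1 0 1 = 0 ∧ (M ^ (m + 1)).1 1 0 = 0 ∧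
      (M ^ (m + 1)).1 0 0 = (M ^ (m + 1)).1 1 1 := by
    rcases hx with h | h <;> rw [h] <;> simp [neg_ent, one_ent]
  obtain ⟨k1, k2, k3⟩ := key
  rw [h2] at k1
  rw [h3] at k2
  rw [h1, h4] at k3
  have b0 : M.1 0 1 = 0 := by
    rcases mul_eq_zero.1 k1 with h | h
    · exact absurd h hP
    · exact h
  have c0 : M.1 1 0 = 0 := by
    rcases mul_eq_zero.1 k2 with h | h
    · exact absurd h hP
    · exact h
  have ad : M.1 0 0 = M.1 1 1 := mul_left_cancel₀ hP (by linarith)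
  have hd := det_ent M
  rw [b0, ad] at hd
  have hsq : M.1 1 1 = 1 ∨ M.1 1 1 = -1 := mul_self_eq_one_iff.1 (by linarith)
  apply hM
  rw [xi_eq_one]
  rcases hsq with h | h
  · left
    apply SL_ext <;> simp [one_ent, b0, c0, ad, h]
  · right
    apply SL_ext <;> simp [one_ent, neg_ent, b0, c0, ad, h]

/-- translation by `k` -/
def Tz (k : ℤ) : SL2Z := ⟨!![1, k; 0, 1], by norm_num [Matrix.det_fin_two_of]⟩

lemma Tz_00 (k : ℤ) : (Tz k).1 0 0 = 1 := rfl
lemma Tz_01 (k : ℤ) : (Tz k).1 0 1 = k := rfl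
lemma Tz_10 (k : ℤ) : (Tz k).1 1 0 = 0 := rfl
lemma Tz_11 (k : ℤ) : (Tz k).1 1 1 = 1 := rfl

lemma inv_ent (A : SL2Z) : A⁻¹.1 0 0 = A.1 1 1 ∧ A⁻¹.1 0 1 = - A.1 0 1 ∧
    A⁻¹.1 1 0 = - A.1 1 0 ∧ A⁻¹.1 1 1 = A.1 0 0 := by
  rw [Matrix.SpecialLinearGroup.SL2_inv_expl]
  simp

/-- conjugate to one of the standard elements of finite order -/
def StdTor (x : PSL2Z) : Prop :=
  ∃ g : PSL2Z, g * x * g⁻¹ = Sp ∨ g * x * g⁻¹ = Up ∨ g * x * g⁻¹ = Up⁻¹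

lemma StdTor.of_conj {x : PSL2Z} (h : PSL2Z) (H : StdTor (h * x * h⁻¹)) : StdTor x := by
  obtain ⟨g, hg⟩ := H
  refine ⟨g * h, ?_⟩
  have : g * h * x * (g * h)⁻¹ = g * (h * x * h⁻¹) * g⁻¹ := by group
  rw [this]; exact hg

lemma red_exists (a c : ℤ) (hc : c ≠ 0) : ∃ k, 2 * |a + k * c| ≤ |c| := by
  have h1 := Int.emod_add_mul_ediv a c
  have h2 := Int.emod_nonneg a hc
  have h3 := Int.emod_lt_abs a hc
  by_cases h : 2 * (a % c) ≤ |c|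
  · refine ⟨-(a / c), ?_⟩
    have : a + -(a / c) * c = a % c := by linarith
    rw [this, abs_of_nonneg h2]; exact h
  · rcases abs_cases c with ⟨hc1, _⟩ | ⟨hc1, _⟩
    · refine ⟨-(a / c) - 1, ?_⟩
      have : a + (-(a / c) - 1) * c = a % c - c := by linarith
      rw [this, abs_of_neg (by omega)]; omega
    · refine ⟨-(a / c) + 1, ?_⟩
      have : a + (-(a / c) + 1) * c = a % c + c := by linarith
      rw [this, abs_of_neg (by omega)]; omega

lemma stdTor_of_trace (N : ℕ) : ∀ M : SL2Z, |M.1 1 0| ≤ N → |M.1 0 0 + M.1 1 1| ≤ 1 →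
    StdTor (xi M) := by
  induction N with
  | zero =>
    intro M h0 ht
    exfalso
    have hc : M.1 1 0 = 0 := by
      have := abs_nonneg (M.1 1 0)
      exact abs_eq_zero.1 (by push_cast at h0; omega)
    have hd := det_ent M
    rw [hc, mul_zero, sub_zero] at hd
    rcases Int.mul_eq_one_iff_eq_one_or_neg_one.1 hd with ⟨h1, h2⟩ | ⟨h1, h2⟩ <;>
      rw [h1, h2] at ht <;> norm_num at ht
  | succ N ih =>
    intro M h0 ht
    by_cases hle : |M.1 1 0| ≤ N
    · exact ih M hle ht
    have hcN : |M.1 1 0| = N + 1 := by push_cast at h0; omega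
    have hc : M.1 1 0 ≠ 0 := by
      intro h; rw [h] at hcN; simp at hcN; omega
    obtain ⟨k, hk⟩ := red_exists (M.1 0 0) (M.1 1 0) hc
    obtain ⟨i1, i2, i3, i4⟩ := inv_ent (Tz k)
    rw [Tz_11] at i1; rw [Tz_01] at i2; rw [Tz_10] at i3; rw [Tz_00] at i4
    obtain ⟨M', hM'⟩ : ∃ M', M' = Tz k * M * (Tz k)⁻¹ := ⟨_, rfl⟩
    have e00 : M'.1 0 0 = M.1 0 0 + k * M.1 1 0 := by
      rw [hM']; simp only [mul_ent, i1, i2, i3, i4, Tz_00, Tz_01, Tz_10, Tz_11]; ring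
    have e10 : M'.1 1 0 = M.1 1 0 := by
      rw [hM']; simp only [mul_ent, i1, i2, i3, i4, Tz_00, Tz_01, Tz_10, Tz_11]; ring
    have e11 : M'.1 1 1 = M.1 1 1 - k * M.1 1 0 := by
      rw [hM']; simp only [mul_ent, i1, i2, i3, i4, Tz_00, Tz_01, Tz_10, Tz_11]; ring
    apply StdTor.of_conj (xi (Tz k))
    rw [← map_mul, ← map_inv, ← map_mul, ← hM']
    rw [← e00, ← e10] at hk
    rw [← e10] at hcN hc
    have ht' : |M'.1 0 0 + M'.1 1 1| ≤ 1 := by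
      rw [e00, e11]; convert ht using 2; ring
    clear e00 e10 e11 hM' i1 i2 i3 i4 ht h0 hle
    have hd := det_ent M'
    obtain ⟨j1, j2, j3, j4⟩ := inv_ent Sm
    rw [Sm_11] at j1; rw [Sm_01] at j2; rw [Sm_10] at j3; rw [Sm_00] at j4
    obtain ⟨M2, hM2⟩ : ∃ M2, M2 = Sm * M' * Sm⁻¹ := ⟨_, rfl⟩
    have f00 : M2.1 0 0 = M'.1 1 1 := by
      rw [hM2]; simp only [mul_ent, j1, j2, j3, j4, Sm_00, Sm_01, Sm_10, Sm_11]; ring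
    have f01 : M2.1 0 1 = - M'.1 1 0 := by
      rw [hM2]; simp only [mul_ent, j1, j2, j3, j4, Sm_00, Sm_01, Sm_10, Sm_11]; ring
    have f10 : M2.1 1 0 = - M'.1 0 1 := by
      rw [hM2]; simp only [mul_ent, j1, j2, j3, j4, Sm_00, Sm_01, Sm_10, Sm_11]; ring
    have f11 : M2.1 1 1 = M'.1 0 0 := by
      rw [hM2]; simp only [mul_ent, j1, j2, j3, j4, Sm_00, Sm_01, Sm_10, Sm_11]; ring
    have hM2' : xi M2 = xi Sm * xi M' * (xi Sm)⁻¹ := by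
      rw [hM2, map_mul, map_inv, map_mul]
    by_cases hb : |M'.1 0 1| ≤ N
    · apply StdTor.of_conj (xi Sm)
      rw [← hM2']
      apply ih
      · rw [f10, abs_neg]; exact hb
      · rw [f00, f11, add_comm]; exact ht'
    · clear ih
      have hb' : (N : ℤ) + 1 ≤ |M'.1 0 1| := by omega
      generalize hA : M'.1 0 0 = a at *
      generalize hB : M'.1 0 1 = b at *
      generalize hC : M'.1 1 0 = c at *
      generalize hD : M'.1 1 1 = d at *
      have hbc : |b| * |c| ≤ |a| * |d| + 1 := by
        rw [← abs_mul, ← abs_mul]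
        have : b * c = a * d - 1 := by linarith
        rw [this]
        calc |a * d - 1| ≤ |a * d| + |1| := abs_sub _ _
          _ = _ := by simp
      have hda : |d| ≤ |a| + 1 := by
        have : d = (a + d) - a := by ring
        calc |d| = |(a + d) - a| := by rw [← this]
          _ ≤ |a + d| + |a| := abs_sub _ _
          _ ≤ _ := by linarith
      have hN : N = 0 := by
        have a0 := abs_nonneg a
        have d0 := abs_nonneg d
        by_contra hne
        have : (1 : ℤ) ≤ N := by omega
        nlinarith
      subst hN
      have ha0 : a = 0 := by
        have a0 := abs_nonneg a
        exact abs_eq_zero.1 (by omega)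
      subst ha0
      have hbc1 : b * c = -1 := by linarith
      have hc1 : c = 1 ∨ c = -1 := by
        rcases abs_cases c with ⟨h, _⟩ | ⟨h, _⟩ <;> omega
      have hd1 : d = 0 ∨ d = 1 ∨ d = -1 := by
        rcases abs_cases (0 + d) with ⟨h, _⟩ | ⟨h, _⟩ <;> omega
      obtain ⟨l1, l2, l3, l4⟩ := inv_ent Um
      rw [Um_11] at l1; rw [Um_01] at l2; rw [Um_10] at l3; rw [Um_00] at l4
      rcases hd1 with rfl | rfl | rfl
      · refine ⟨1, Or.inl ?_⟩
        rw [one_mul, inv_one, mul_one, ← xi_Sm, xi_eq]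
        rcases hc1 with rfl | rfl
        · left; apply SL_ext <;> simp only [Sm_00, Sm_01, Sm_10, Sm_11, hA, hB, hC, hD]; omega
        · right; apply SL_ext <;> simp only [neg_ent, Sm_00, Sm_01, Sm_10, Sm_11, hA, hB, hC, hD] <;> omega
      · rcases hc1 with rfl | rfl
        · refine ⟨1, Or.inr (Or.inl ?_)⟩
          rw [one_mul, inv_one, mul_one, ← xi_Um, xi_eq]
          left; apply SL_ext <;> simp only [Um_00, Um_01, Um_10, Um_11, hA, hB, hC, hD]; omega
        · refine ⟨xi Sm, Or.inr (Or.inr ?_)⟩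
          rw [← hM2', ← xi_Um, ← map_inv, xi_eq]
          left; apply SL_ext <;> simp only [l1, l2, l3, l4, f00, f01, f10, f11] <;> omega
      · rcases hc1 with rfl | rfl
        · refine ⟨xi Sm, Or.inr (Or.inr ?_)⟩
          rw [← hM2', ← xi_Um, ← map_inv, xi_eq]
          right; apply SL_ext <;> simp only [neg_ent, l1, l2, l3, l4, f00, f01, f10, f11] <;> omega
        · refine ⟨1, Or.inr (Or.inl ?_)⟩
          rw [one_mul, inv_one, mul_one, ← xi_Um, xi_eq]
          right; apply SL_ext <;> simp only [neg_ent, Um_00, Um_01, Um_10, Um_11, hA, hB, hC, hD] <;> omega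

lemma stdTor (x : PSL2Z) (hx : x ≠ 1) (hf : IsOfFinOrder x) : StdTor x := by
  obtain ⟨M, rfl⟩ := xi_surj x
  exact stdTor_of_trace (M.1 1 0).natAbs M (by simp) (trace_small M hx hf)

lemma torsionFree_iff (Γ : Subgroup PSL2Z) : TorsionFree Γ ↔
    (∀ x : PSL2Z ⧸ Γ, Sp • x ≠ x) ∧ (∀ x : PSL2Z ⧸ Γ, Up • x ≠ x) := by
  have fin_S : IsOfFinOrder Sp := isOfFinOrder_iff_pow_eq_one.2 ⟨2, by norm_num, by rw [pow_two, Sp_sq]⟩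
  have fin_U : IsOfFinOrder Up :=
    isOfFinOrder_iff_pow_eq_one.2 ⟨3, by norm_num, by rw [pow_succ, pow_two, Up_cube]⟩
  have key : ∀ y g : PSL2Z, y • (g : PSL2Z ⧸ Γ) = g ↔ g⁻¹ * y * g ∈ Γ := by
    intro y g
    have : y • (g : PSL2Z ⧸ Γ) = ((y * g : PSL2Z) : PSL2Z ⧸ Γ) := rfl
    rw [this, eq_comm, QuotientGroup.eq, mul_assoc]
  have free : ∀ y : PSL2Z, y ≠ 1 → IsOfFinOrder y → TorsionFree Γ → ∀ x : PSL2Z ⧸ Γ, y • x ≠ x := by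
    intro y hy hf hT x hx
    obtain ⟨g, rfl⟩ := QuotientGroup.mk_surjective x
    rw [key] at hx
    refine hT _ hx ?_ ?_
    · intro h
      apply hy
      have : y = g * (g⁻¹ * y * g) * g⁻¹ := by group
      rw [this, h]; group
    · have : g⁻¹ * y * g = MulAut.conj g⁻¹ y := by simp
      rw [this]
      exact (MulAut.conj g⁻¹).toMonoidHom.isOfFinOrder hf
  constructor
  · intro hT
    exact ⟨free Sp Sp_ne fin_S hT, free Up Up_ne fin_U hT⟩
  · rintro ⟨hS, hU⟩ x hx hx1 hf
    obtain ⟨g, h⟩ := stdTor x hx1 hf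
    have conj : g⁻¹ * (g * x * g⁻¹) * g ∈ Γ := by
      have : g⁻¹ * (g * x * g⁻¹) * g = x := by group
      rwa [this]
    rw [← key] at conj
    rcases h with h | h | h
    · rw [h] at conj; exact hS _ conj
    · rw [h] at conj; exact hU _ conj
    · rw [h, inv_smul_eq_iff] at conj; exact hU _ conj.symm

/-! ### Digits, the rotation, canonical tables -/

lemma dig_eq (T x : ℕ) : dig T x = T / 32 ^ x % 32 := by
  show (T >>> (5 * x)) &&& 31 = _
  rw [Nat.shiftRight_eq_div_pow, pow_mul]
  exact Nat.and_two_pow_sub_one_eq_mod _ 5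

lemma putAt_eq (x y : ℕ) : putAt x y = y * 32 ^ x := by
  show y <<< (5 * x) = _
  rw [Nat.shiftLeft_eq, pow_mul]; norm_num

lemma dig_put (T x y z : ℕ) (h0 : dig T x = 0) (hy : y < 32) :
    dig (T + putAt x y) z = if z = x then y else dig T z := by
  rw [dig_eq] at h0
  rw [dig_eq, dig_eq, putAt_eq]
  have hx : (T + y * 32 ^ x) / 32 ^ x = T / 32 ^ x + y :=
    Nat.add_mul_div_right _ _ (by positivity)
  rcases lt_trichotomy z x with h | h | h
  · rw [if_neg (by omega)]
    obtain ⟨k, rfl⟩ : ∃ k, x = z + 1 + k := ⟨x - z - 1, by omega⟩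
    have : T + y * 32 ^ (z + 1 + k) = T + (32 * (y * 32 ^ k)) * 32 ^ z := by ring
    rw [this, Nat.add_mul_div_right _ _ (by positivity), Nat.add_mul_mod_self_left]
  · subst h
    rw [if_pos rfl, hx]
    omega
  · rw [if_neg (by omega)]
    obtain ⟨k, rfl⟩ : ∃ k, z = x + (1 + k) := ⟨z - x - 1, by omega⟩
    have e : (32 : ℕ) ^ (x + (1 + k)) = 32 ^ x * (32 * 32 ^ k) := by ring
    rw [e, ← Nat.div_div_eq_div_mul, ← Nat.div_div_eq_div_mul, hx, ← Nat.div_div_eq_div_mul,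
      ← Nat.div_div_eq_div_mul]
    have : (T / 32 ^ x + y) / 32 = T / 32 ^ x / 32 := by omega
    rw [this]

lemma dig_zero (z : ℕ) : dig 0 z = 0 := by rw [dig_eq]; simp

lemma dig_lt (T z : ℕ) : dig T z < 32 := by rw [dig_eq]; exact Nat.mod_lt _ (by norm_num)

lemma dig_ext (A B n : ℕ) (hA : A < 32 ^ n) (hB : B < 32 ^ n) (h : ∀ i < n, dig A i = dig B i) :
    A = B := by
  induction n generalizing A B with
  | zero => simp at hA hB; omega
  | succ n ih =>
    have h0 := h 0 (by omega)
    rw [dig_eq, dig_eq] at h0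
    simp at h0
    have : A / 32 = B / 32 := by
      apply ih
      · rw [Nat.div_lt_iff_lt_mul (by norm_num)]; rwa [pow_succ] at hA
      · rw [Nat.div_lt_iff_lt_mul (by norm_num)]; rwa [pow_succ] at hB
      · intro i hi
        have := h (i + 1) (by omega)
        rw [dig_eq, dig_eq, pow_succ', ← Nat.div_div_eq_div_mul, ← Nat.div_div_eq_div_mul] at this
        rw [dig_eq, dig_eq]; exact this
    omega

lemma u0_eq : ∀ d < 24, u0 d = if d % 3 = 2 then d - 2 else d + 1 := by decide +kernel

lemma u0_lt (d : ℕ) (h : d < 24) : u0 d < 24 := by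
  rw [u0_eq d h]; split_ifs <;> omega

lemma u0_lt3 (d k : ℕ) (h : d < 24) : u0 d < 3 * k ↔ d < 3 * k := by
  rw [u0_eq d h]; split_ifs <;> omega

lemma u0_cube (d : ℕ) (h : d < 24) : u0 (u0 (u0 d)) = d := by
  have h1 := u0_lt d h
  have h2 := u0_lt _ h1
  rw [u0_eq _ h2, u0_eq _ h1, u0_eq _ h]; split_ifs <;> omega

lemma u0_a (k : ℕ) (h : k < 8) : u0 (3 * k) = 3 * k + 1 := by
  rw [u0_eq _ (by omega)]; split_ifs <;> omega
lemma u0_b (k : ℕ) (h : k < 8) : u0 (3 * k + 1) = 3 * k + 2 := by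
  rw [u0_eq _ (by omega)]; split_ifs <;> omega
lemma u0_c (k : ℕ) (h : k < 8) : u0 (3 * k + 2) = 3 * k := by
  rw [u0_eq _ (by omega)]; split_ifs <;> omega

lemma force_eq (n : ℕ) (k : ℕ → Bool) : force n k = k n := by
  cases n <;> rfl

lemma brec (a b c : Bool) : Bool.rec (motive := fun _ => Bool) a b c = (bif c then b else a) := by
  cases c <;> rfl

/-- number of vertices discovered before the dart `x` is treated -/
def Kf (t : ℕ → ℕ) : ℕ → ℕ
  | 0 => 1
  | (x + 1) => if t x = 3 * Kf t x then Kf t x + 1 else Kf t x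

def Canon (t : ℕ → ℕ) : Prop := (∀ x < 24, x < 3 * Kf t x ∧ t x ≤ 3 * Kf t x) ∧ Kf t 24 = 8

lemma Kf_congr (t t' : ℕ → ℕ) (x : ℕ) (h : ∀ i < x, t i = t' i) : Kf t x = Kf t' x := by
  induction x with
  | zero => rfl
  | succ x ih =>
    rw [Kf, Kf, ih (fun i hi => h i (by omega)), h x (by omega)]

lemma Kf_mono (t : ℕ → ℕ) : Monotone (Kf t) := by
  apply monotone_nat_of_le_succ
  intro n
  rw [Kf]; split_ifs <;> omega

lemma Kf_pos (t : ℕ → ℕ) (x : ℕ) : 1 ≤ Kf t x := Kf_mono t (Nat.zero_le x)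

lemma Canon.K_le {t : ℕ → ℕ} (h : Canon t) {x : ℕ} (hx : x ≤ 24) : Kf t x ≤ 8 :=
  h.2 ▸ Kf_mono t hx

/-- labelled description of the pair of maps `s`, `u` by the table `t` -/
structure Lab {X : Type*} (s u : X → X) (t : ℕ → ℕ) (l : ℕ → X) : Prop where
  lt : ∀ i < 24, t i < 24
  inj : ∀ i < 24, ∀ j < 24, l i = l j → i = j
  surj : ∀ x, ∃ i < 24, l i = x
  hu : ∀ i < 24, l (u0 i) = u (l i)
  hs : ∀ i < 24, l (t i) = s (l i)

/-- transitive fixed point free actions on 24 points -/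
structure Dat {X : Type*} (s u : X → X) : Prop where
  ss : ∀ x, s (s x) = x
  uuu : ∀ x, u (u (u x)) = x
  sne : ∀ x, s x ≠ x
  une : ∀ x, u x ≠ x
  conn : ∀ (P : X → Prop) (x0 : X), P x0 → (∀ x, P x → P (s x)) → (∀ x, P x → P (u x)) → ∀ x, P x
  card : Nat.card X = 24

/-- the state of the labelling procedure before the dart `x` is treated -/
structure PartLab {X : Type*} (s u : X → X) (x : ℕ) (t : ℕ → ℕ) (l : ℕ → X) : Prop where
  can : ∀ i < x, i < 3 * Kf t i ∧ t i ≤ 3 * Kf t i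
  le : Kf t x ≤ 8
  inj : ∀ i < 3 * Kf t x, ∀ j < 3 * Kf t x, l i = l j → i = j
  hu : ∀ i < 3 * Kf t x, l (u0 i) = u (l i)
  hs : ∀ i < x, l (t i) = s (l i)

lemma PartLab.tlt {X : Type*} {s u : X → X} {x : ℕ} {t : ℕ → ℕ} {l : ℕ → X} (h : PartLab s u x t l)
    (i : ℕ) (hi : i < x) : t i < 3 * Kf t x := by
  have h1 := (h.can i hi).2
  have h2 : Kf t (i + 1) ≤ Kf t x := Kf_mono t hi
  rw [Kf] at h2
  split_ifs at h2 <;> omega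

lemma PartLab.closed {X : Type*} {s u : X → X} {x : ℕ} {t : ℕ → ℕ} {l : ℕ → X} (h : PartLab s u x t l)
    (hD : Dat s u) (hx : 3 * Kf t x ≤ x) : ∀ y, ∃ i < 3 * Kf t x, l i = y := by
  have hle := h.le
  have hp := Kf_pos t x
  refine hD.conn (fun y => ∃ i < 3 * Kf t x, l i = y) (l 0) ?_ ?_ ?_
  · exact ⟨0, by omega, rfl⟩
  · rintro y ⟨i, hi, rfl⟩
    exact ⟨t i, h.tlt i (by omega), h.hs i (by omega)⟩
  · rintro y ⟨i, hi, rfl⟩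
    exact ⟨u0 i, (u0_lt3 i _ (by omega)).2 hi, h.hu i hi⟩

lemma card_of_surj {X : Type*} (n : ℕ) (l : ℕ → X) (h : ∀ y, ∃ i < n, l i = y) :
    Nat.card X ≤ n := by
  have : Function.Surjective (fun i : Fin n => l i) := by
    intro y
    obtain ⟨i, hi, rfl⟩ := h y
    exact ⟨⟨i, hi⟩, rfl⟩
  simpa using Nat.card_le_card_of_surjective _ this

lemma card_of_inj {X : Type*} [Finite X] (n : ℕ) (l : ℕ → X)
    (h : ∀ i < n, ∀ j < n, l i = l j → i = j) : n ≤ Nat.card X := by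
  have : Function.Injective (fun i : Fin n => l i) := by
    intro i j hij
    exact Fin.ext (h i i.2 j j.2 hij)
  simpa using Nat.card_le_card_of_injective _ this

lemma PartLab.step {X : Type*} {s u : X → X} {x : ℕ} {t : ℕ → ℕ} {l : ℕ → X} (h : PartLab s u x t l)
    (hD : Dat s u) (hx : x < 24) : ∃ t' l', PartLab s u (x + 1) t' l' ∧ l' 0 = l 0 := by
  have hfin : Finite X := Nat.finite_of_card_ne_zero (by rw [hD.card]; norm_num)
  have hle := h.le
  have hp := Kf_pos t x
  have hx3 : x < 3 * Kf t x := by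
    by_contra hcon
    have := card_of_surj _ l (h.closed hD (by omega))
    rw [hD.card] at this
    omega
  by_cases hold : ∃ j < 3 * Kf t x, l j = s (l x)
  · obtain ⟨j, hj, hjx⟩ := hold
    have hK : ∀ i ≤ x, Kf (Function.update t x j) i = Kf t i := fun i hi =>
      Kf_congr _ _ _ (fun m hm => Function.update_of_ne (by omega) _ _)
    have hK1 : Kf (Function.update t x j) (x + 1) = Kf t x := by
      rw [Kf, hK x le_rfl, Function.update_self, if_neg (by omega)]
    refine ⟨Function.update t x j, l, ⟨?_, ?_, ?_, ?_, ?_⟩, rfl⟩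
    · intro i hi
      rw [hK i (by omega)]
      rcases Nat.lt_succ_iff_lt_or_eq.1 hi with hi' | rfl
      · rw [Function.update_of_ne (by omega)]; exact h.can i hi'
      · rw [Function.update_self]; omega
    · rw [hK1]; exact hle
    · rw [hK1]; exact h.inj
    · rw [hK1]; exact h.hu
    · intro i hi
      rcases Nat.lt_succ_iff_lt_or_eq.1 hi with hi' | rfl
      · rw [Function.update_of_ne (by omega)]; exact h.hs i hi'
      · rw [Function.update_self]; exact hjx
  · push Not at hold
    obtain ⟨k, hk⟩ : ∃ k, k = Kf t x := ⟨_, rfl⟩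
    have hinj0 := h.inj
    have hu0 := h.hu
    have htl := h.tlt
    rw [← hk] at hold hle hp hx3 hinj0 hu0 htl
    have hK : ∀ i ≤ x, Kf (Function.update t x (3 * k)) i = Kf t i := fun i hi =>
      Kf_congr _ _ _ (fun m hm => Function.update_of_ne (by omega) _ _)
    have hK1 : Kf (Function.update t x (3 * k)) (x + 1) = k + 1 := by
      rw [Kf, hK x le_rfl, Function.update_self, if_pos (by omega), ← hk]
    obtain ⟨y, hy⟩ : ∃ y, y = s (l x) := ⟨_, rfl⟩
    rw [← hy] at hold
    have n0 : ∀ j < 3 * k, l j ≠ y := hold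
    have n1 : ∀ j < 3 * k, l j ≠ u y := by
      intro j hj he
      have hj1 := (u0_lt3 j k (by omega)).2 hj
      refine n0 (u0 (u0 j)) ((u0_lt3 _ k (by omega)).2 hj1) ?_
      rw [hu0 _ (by omega), hu0 _ (by omega), he, hD.uuu]
    have n2 : ∀ j < 3 * k, l j ≠ u (u y) := by
      intro j hj he
      refine n0 (u0 j) ((u0_lt3 j k (by omega)).2 hj) ?_
      rw [hu0 _ (by omega), he, hD.uuu]
    have m1 : u y ≠ y := hD.une y
    have m2 : u (u y) ≠ u y := hD.une _
    have m3 : u (u y) ≠ y := by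
      intro he
      have := hD.uuu y
      rw [he] at this
      exact m1 this
    obtain ⟨l', hl'⟩ : ∃ l' : ℕ → X, l' = fun i => if i < 3 * k then l i else
      if i = 3 * k then y else if i = 3 * k + 1 then u y else u (u y) := ⟨_, rfl⟩
    have la : ∀ i < 3 * k, l' i = l i := fun i hi => by rw [hl']; simp [hi]
    have lb : l' (3 * k) = y := by rw [hl']; simp
    have lc : l' (3 * k + 1) = u y := by rw [hl']; simp
    have ld : l' (3 * k + 2) = u (u y) := by rw [hl']; simp
    have hinj : ∀ i < 3 * (k + 1), ∀ j < 3 * (k + 1), l' i = l' j → i = j := by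
      intro i hi j hj hij
      have ci : i < 3 * k ∨ i = 3 * k ∨ i = 3 * k + 1 ∨ i = 3 * k + 2 := by omega
      have cj : j < 3 * k ∨ j = 3 * k ∨ j = 3 * k + 1 ∨ j = 3 * k + 2 := by omega
      rcases ci with ci | rfl | rfl | rfl <;> rcases cj with cj | rfl | rfl | rfl <;>
        (try rw [la _ ci] at hij) <;> (try rw [la _ cj] at hij) <;>
        (try simp only [lb, lc, ld] at hij) <;> first
          | rfl
          | exact hinj0 _ ci _ cj hij
          | exact absurd hij (n0 _ ‹_›)
          | exact absurd hij (n1 _ ‹_›)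
          | exact absurd hij (n2 _ ‹_›)
          | exact absurd hij.symm (n0 _ ‹_›)
          | exact absurd hij.symm (n1 _ ‹_›)
          | exact absurd hij.symm (n2 _ ‹_›)
          | exact absurd hij m1
          | exact absurd hij m2
          | exact absurd hij m3
          | exact absurd hij.symm m1
          | exact absurd hij.symm m2
          | exact absurd hij.symm m3
    have hk8 : k + 1 ≤ 8 := by
      have := card_of_inj _ l' hinj
      rw [hD.card] at this
      omega
    refine ⟨Function.update t x (3 * k), l', ⟨?_, ?_, ?_, ?_, ?_⟩, ?_⟩
    · intro i hi
      rw [hK i (by omega)]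
      rcases Nat.lt_succ_iff_lt_or_eq.1 hi with hi' | rfl
      · rw [Function.update_of_ne (by omega)]; exact h.can i hi'
      · rw [Function.update_self]; omega
    · rw [hK1]; exact hk8
    · rw [hK1]; exact hinj
    · rw [hK1]
      intro i hi
      have ci : i < 3 * k ∨ i = 3 * k ∨ i = 3 * k + 1 ∨ i = 3 * k + 2 := by omega
      rcases ci with ci | rfl | rfl | rfl
      · rw [la _ ci, la _ ((u0_lt3 i k (by omega)).2 ci)]; exact hu0 i ci
      · rw [u0_a k (by omega), lb, lc]
      · rw [u0_b k (by omega), lc, ld]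
      · rw [u0_c k (by omega), lb, ld, hD.uuu]
    · intro i hi
      rcases Nat.lt_succ_iff_lt_or_eq.1 hi with hi' | rfl
      · have := htl i hi'
        rw [Function.update_of_ne (by omega), la _ (by omega), la _ (by omega)]; exact h.hs i hi'
      · rw [Function.update_self, lb, la _ (by omega), hy]
    · exact la _ (by omega)

theorem exists_canon {X : Type*} {s u : X → X} (hD : Dat s u) (x0 : X) :
    ∃ t l, Lab s u t l ∧ Canon t ∧ l 0 = x0 := by
  have key : ∀ x ≤ 24, ∃ t l, PartLab s u x t l ∧ l 0 = x0 := by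
    intro x
    induction x with
    | zero =>
      intro _
      have m1 : u x0 ≠ x0 := hD.une x0
      have m2 : u (u x0) ≠ u x0 := hD.une _
      have m3 : u (u x0) ≠ x0 := by
        intro he
        have := hD.uuu x0
        rw [he] at this
        exact m1 this
      refine ⟨fun _ => 0, fun i => if i = 0 then x0 else if i = 1 then u x0 else u (u x0),
        ⟨by simp, by simp [Kf], ?_, ?_, by simp⟩, by simp⟩
      · simp only [Kf]
        intro i hi j hj hij
        interval_cases i <;> interval_cases j <;> simp_all [eq_comm]
      · simp only [Kf]
        intro i hi
        interval_cases i
        · rw [u0_a 0 (by norm_num)]; simp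
        · rw [u0_b 0 (by norm_num)]; simp
        · rw [u0_c 0 (by norm_num)]; simp [hD.uuu]
    | succ x ih =>
      intro hx
      obtain ⟨t, l, h, h0⟩ := ih (by omega)
      obtain ⟨t', l', h', h0'⟩ := h.step hD (by omega)
      exact ⟨t', l', h', h0'.trans h0⟩
  obtain ⟨t, l, h, h0⟩ := key 24 le_rfl
  have hle := h.le
  have hcl := h.closed hD (by omega)
  have hK : Kf t 24 = 8 := by
    have := card_of_surj _ l hcl
    rw [hD.card] at this
    omega
  have hi := h.inj
  have hu := h.hu
  have htl := h.tlt
  rw [hK] at hcl hi hu htl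
  exact ⟨t, l, ⟨htl, hi, hcl, hu, h.hs⟩, ⟨h.can, hK⟩, h0⟩

/-! ### Comparison of tables -/

lemma brec_beq {α : Type*} (a b : α) (m n : ℕ) :
    Bool.rec (motive := fun _ => α) a b (Nat.beq m n) = if m = n then b else a := by
  have h : Nat.beq m n = decide (m = n) := by
    rw [Bool.eq_iff_iff, Nat.beq_eq, decide_eq_true_iff]
  rw [h]
  by_cases h : m = n <;> simp [h]

lemma brec_ble {α : Type*} (a b : α) (m n : ℕ) :
    Bool.rec (motive := fun _ => α) a b (Nat.ble m n) = if m ≤ n then b else a := by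
  have h : Nat.ble m n = decide (m ≤ n) := by
    rw [Bool.eq_iff_iff, Nat.ble_eq, decide_eq_true_iff]
  rw [h]
  by_cases h : m ≤ n <;> simp [h]

lemma addVert_eq (m e phi psi : ℕ) (go : ℕ → ℕ → Bool) :
    addVert m e phi psi go =
      go (phi + phiBlock m e (u0 e) (u0 (u0 e))) (psi + psiBlock m e (u0 e) (u0 (u0 e))) := by
  simp only [addVert, force_eq]; rfl

lemma cmpGo_succ (T f x k phi psi : ℕ) : cmpGo T (f + 1) x k phi psi =
    if dig T (dig phi x) = 0 then true else
      if dig psi (dig T (dig phi x) - 1) = 0 then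
        if 3 * k + 1 = dig T x then
          addVert (3 * k) (dig T (dig phi x) - 1) phi psi (cmpGo T f (x + 1) (k + 1))
        else Nat.ble (dig T x) (3 * k + 1)
      else if dig psi (dig T (dig phi x) - 1) = dig T x then cmpGo T f (x + 1) k phi psi
        else Nat.ble (dig T x) (dig psi (dig T (dig phi x) - 1)) := by
  show (force (dig T (dig phi x)) fun y1 =>
      force (dig psi (Nat.pred y1)) fun v1 =>
      force (dig T x) fun w1 =>
      Bool.rec (motive := fun _ => Bool)
        (Bool.rec (motive := fun _ => Bool)
          (Bool.rec (motive := fun _ => Bool)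
            (Nat.ble w1 v1)
            (cmpGo T f (Nat.succ x) k phi psi)
            (Nat.beq v1 w1))
          (Bool.rec (motive := fun _ => Bool)
            (Nat.ble w1 (Nat.succ (Nat.mul 3 k)))
            (addVert (Nat.mul 3 k) (Nat.pred y1) phi psi (cmpGo T f (Nat.succ x) (Nat.succ k)))
            (Nat.beq (Nat.succ (Nat.mul 3 k)) w1))
          (Nat.beq v1 0))
        true
        (Nat.beq y1 0)) = _
  simp only [force_eq, brec_beq]
  rfl

lemma cmpGo_zero (T x k phi psi : ℕ) : cmpGo T 0 x k phi psi = true := rfl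

lemma dig_phiBlock (phi m e e1 e2 z : ℕ) (h0 : dig phi m = 0) (h1 : dig phi (m + 1) = 0)
    (h2 : dig phi (m + 2) = 0) (he : e < 32) (he1 : e1 < 32) (he2 : e2 < 32) :
    dig (phi + phiBlock m e e1 e2) z =
      if z = m then e else if z = m + 1 then e1 else if z = m + 2 then e2 else dig phi z := by
  have : phi + phiBlock m e e1 e2 = phi + putAt m e + putAt (m + 1) e1 + putAt (m + 2) e2 := by
    show phi + (putAt m e + (putAt (m + 1) e1 + putAt (m + 2) e2)) = _
    ring
  rw [this, dig_put, dig_put, dig_put _ _ _ _ h0 he]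
  · split_ifs <;> omega
  · rw [dig_put _ _ _ _ h0 he, if_neg (by omega)]; exact h1
  · exact he1
  · rw [dig_put, dig_put _ _ _ _ h0 he, if_neg (by omega), if_neg (by omega)]; exact h2
    · rw [dig_put _ _ _ _ h0 he, if_neg (by omega)]; exact h1
    · exact he1
  · exact he2

lemma dig_psiBlock (psi m e e1 e2 z : ℕ) (h0 : dig psi e = 0) (h1 : dig psi e1 = 0)
    (h2 : dig psi e2 = 0) (he : e ≠ e1) (he1 : e ≠ e2) (he2 : e1 ≠ e2) (hm : m + 3 < 32) :
    dig (psi + psiBlock m e e1 e2) z =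
      if z = e then m + 1 else if z = e1 then m + 2 else if z = e2 then m + 3 else dig psi z := by
  have : psi + psiBlock m e e1 e2 = psi + putAt e (m + 1) + putAt e1 (m + 2) + putAt e2 (m + 3) := by
    show psi + (putAt e (m + 1) + (putAt e1 (m + 2) + putAt e2 (m + 3))) = _
    ring
  rw [this, dig_put, dig_put, dig_put _ _ _ _ h0 (by omega)]
  · split_ifs <;> omega
  · rw [dig_put _ _ _ _ h0 (by omega), if_neg (by omega)]; exact h1
  · omega
  · rw [dig_put, dig_put _ _ _ _ h0 (by omega), if_neg (by omega), if_neg (by omega)]; exact h2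
    · rw [dig_put _ _ _ _ h0 (by omega), if_neg (by omega)]; exact h1
    · omega
  · omega

/-- lexicographic comparison -/
def Llt (t' t : ℕ → ℕ) : Prop := ∃ x < 24, (∀ i < x, t' i = t i) ∧ t' x < t x

lemma Llt.irrefl (t : ℕ → ℕ) : ¬ Llt t t := by rintro ⟨x, _, _, h⟩; omega

lemma Llt.trans {a b c : ℕ → ℕ} (h1 : Llt a b) (h2 : Llt b c) : Llt a c := by
  obtain ⟨x, hx, hx1, hx2⟩ := h1
  obtain ⟨y, hy, hy1, hy2⟩ := h2
  rcases lt_trichotomy x y with h | h | h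
  · exact ⟨x, hx, fun i hi => (hx1 i hi).trans (hy1 i (by omega)), by rw [← hy1 x h]; exact hx2⟩
  · subst h
    exact ⟨x, hx, fun i hi => (hx1 i hi).trans (hy1 i (by omega)), by omega⟩
  · exact ⟨y, hy, fun i hi => (hx1 i (by omega)).trans (hy1 i (by omega)), by rw [hx1 y h]; exact hy2⟩

lemma Llt.total {a b : ℕ → ℕ} (h1 : ¬ Llt a b) (h2 : ¬ Llt b a) : ∀ i < 24, a i = b i := by
  intro i
  induction i using Nat.strong_induction_on with
  | _ i ih =>
    intro hi
    by_contra hne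
    rcases Nat.lt_or_gt_of_ne hne with h | h
    · exact h1 ⟨i, hi, fun j hj => ih j hj (by omega), h⟩
    · exact h2 ⟨i, hi, fun j hj => (ih j hj (by omega)).symm, h⟩

/-- `T` is a part of the table `t` -/
def SubTab (T : ℕ) (t : ℕ → ℕ) : Prop := ∀ z < 24, dig T z = 0 ∨ dig T z = t z + 1

/-- isomorphism of tables -/
structure Iso (t t' φ : ℕ → ℕ) : Prop where
  lt : ∀ i < 24, φ i < 24
  inj : ∀ i < 24, ∀ j < 24, φ i = φ j → i = j
  hu : ∀ i < 24, φ (u0 i) = u0 (φ i)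
  ht : ∀ i < 24, φ (t' i) = t (φ i)
  tlt : ∀ i < 24, t' i < 24

structure CmpInv (t t' φ : ℕ → ℕ) (x k phi psi : ℕ) : Prop where
  hk : k = Kf t' x
  eq : ∀ i < x, t' i = t i
  phi : ∀ i < 24, dig phi i = if i < 3 * k then φ i else 0
  psi : ∀ i < 24, dig psi (φ i) = if i < 3 * k then i + 1 else 0

lemma block_inv {t t' φ : ℕ → ℕ} (hI : Iso t t' φ) {k phi psi : ℕ} (hk : k < 8)
    (h1 : ∀ i < 24, dig phi i = if i < 3 * k then φ i else 0)
    (h2 : ∀ i < 24, dig psi (φ i) = if i < 3 * k then i + 1 else 0) :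
    (∀ i < 24, dig (phi + phiBlock (3 * k) (φ (3 * k)) (u0 (φ (3 * k))) (u0 (u0 (φ (3 * k))))) i
      = if i < 3 * (k + 1) then φ i else 0) ∧
    (∀ i < 24, dig (psi + psiBlock (3 * k) (φ (3 * k)) (u0 (φ (3 * k))) (u0 (u0 (φ (3 * k))))) (φ i)
      = if i < 3 * (k + 1) then i + 1 else 0) := by
  have e1 : u0 (φ (3 * k)) = φ (3 * k + 1) := by rw [← hI.hu _ (by omega), u0_a k hk]
  have e2 : u0 (φ (3 * k + 1)) = φ (3 * k + 2) := by rw [← hI.hu _ (by omega), u0_b k hk]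
  have inj := hI.inj
  rw [e1, e2]
  constructor
  · intro i hi
    rw [dig_phiBlock]
    · rw [h1 i hi]
      rcases (by omega : i < 3 * k ∨ i = 3 * k ∨ i = 3 * k + 1 ∨ i = 3 * k + 2 ∨ 3 * k + 3 ≤ i)
        with h | rfl | rfl | rfl | h <;> (repeat' split_ifs) <;> first | rfl | omega
    · rw [h1 _ (by omega), if_neg (by omega)]
    · rw [h1 _ (by omega), if_neg (by omega)]
    · rw [h1 _ (by omega), if_neg (by omega)]
    · have := hI.lt (3 * k) (by omega); omega
    · have := hI.lt (3 * k + 1) (by omega); omega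
    · have := hI.lt (3 * k + 2) (by omega); omega
  · intro i hi
    have inj' : ∀ j < 24, φ i = φ j ↔ i = j := fun j hj => ⟨inj i hi j hj, fun h => by rw [h]⟩
    rw [dig_psiBlock]
    · have j0 := inj' (3 * k) (by omega)
      have j1 := inj' (3 * k + 1) (by omega)
      have j2 := inj' (3 * k + 2) (by omega)
      simp only [h2 i hi, j0, j1, j2]
      split_ifs <;> omega
    · rw [h2 _ (by omega), if_neg (by omega)]
    · rw [h2 _ (by omega), if_neg (by omega)]
    · rw [h2 _ (by omega), if_neg (by omega)]
    · intro h; have := inj _ (by omega) _ (by omega) h; omega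
    · intro h; have := inj _ (by omega) _ (by omega) h; omega
    · intro h; have := inj _ (by omega) _ (by omega) h; omega
    · omega

lemma CmpInv.x_lt {t t' φ : ℕ → ℕ} {x k phi psi : ℕ} (h : CmpInv t t' φ x k phi psi)
    (hc : Canon t') (hx : x < 24) : x < 3 * k ∧ t' x ≤ 3 * k := by
  rw [h.hk]; exact hc.1 x hx

lemma CmpInv.next {t t' φ : ℕ → ℕ} {x k phi psi : ℕ} (h : CmpInv t t' φ x k phi psi)
    (hlt : t' x < 3 * k) (he : t' x = t x) : CmpInv t t' φ (x + 1) k phi psi := by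
  refine ⟨?_, ?_, h.phi, h.psi⟩
  · rw [Kf, ← h.hk, if_neg (by omega)]
  · intro i hi
    rcases Nat.lt_succ_iff_lt_or_eq.1 hi with hi' | rfl
    · exact h.eq i hi'
    · exact he

lemma CmpInv.add {t t' φ : ℕ → ℕ} {x k phi psi : ℕ} (h : CmpInv t t' φ x k phi psi)
    (hI : Iso t t' φ) (hx : x < 24) (hlt : t' x = 3 * k) (he : t' x = t x) :
    CmpInv t t' φ (x + 1) (k + 1)
      (phi + phiBlock (3 * k) (φ (3 * k)) (u0 (φ (3 * k))) (u0 (u0 (φ (3 * k)))))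
      (psi + psiBlock (3 * k) (φ (3 * k)) (u0 (φ (3 * k))) (u0 (u0 (φ (3 * k))))) := by
  have hk : k < 8 := by have := hI.tlt x hx; omega
  obtain ⟨b1, b2⟩ := block_inv hI hk h.phi h.psi
  refine ⟨?_, ?_, b1, b2⟩
  · rw [Kf, ← h.hk, if_pos (by omega)]
  · intro i hi
    rcases Nat.lt_succ_iff_lt_or_eq.1 hi with hi' | rfl
    · exact h.eq i hi'
    · exact he

lemma ble_false {a b : ℕ} (h : Nat.ble a b = false) : b < a := by
  by_contra hc
  rw [Nat.ble_eq_true_of_le (by omega)] at h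
  exact absurd h (by simp)

lemma cmpGo_false {t t' φ : ℕ → ℕ} (hI : Iso t t' φ) (hc : Canon t') {T : ℕ} (hT : SubTab T t)
    (fuel : ℕ) : ∀ x k phi psi, x + fuel ≤ 24 → CmpInv t t' φ x k phi psi →
      cmpGo T fuel x k phi psi = false → Llt t' t := by
  induction fuel with
  | zero => intro x k phi psi _ _ h; rw [cmpGo_zero] at h; simp at h
  | succ f ih =>
    intro x k phi psi hxf hinv h
    obtain ⟨hx, hx'⟩ := hinv.x_lt hc (by omega)
    rw [cmpGo_succ, hinv.phi x (by omega), if_pos hx] at h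
    have hφ := hI.lt x (by omega)
    split_ifs at h with c1 c2 c3 c4
    all_goals have c1' := (hT _ hφ).resolve_left c1
    all_goals have e1 : dig T (φ x) - 1 = φ (t' x) := by rw [c1', hI.ht x (by omega)]; omega
    all_goals rw [e1, hinv.psi _ (hI.tlt x (by omega))] at c2
    · have h3 : t' x = 3 * k := by split_ifs at c2; omega
      have h4 : t' x = t x := by
        rcases hT x (by omega) with h5 | h5 <;> omega
      rw [addVert_eq, e1, h3] at h
      exact ih _ _ _ _ (by omega) (hinv.add hI (by omega) h3 h4) h
    · have h3 : t' x = 3 * k := by split_ifs at c2; omega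
      have := ble_false h
      exact ⟨x, by omega, hinv.eq, by rcases hT x (by omega) with h5 | h5 <;> omega⟩
    · rw [e1, hinv.psi _ (hI.tlt x (by omega))] at c4
      have h3 : t' x < 3 * k := by by_contra hcon; rw [if_neg hcon] at c2; exact c2 rfl
      rw [if_pos h3] at c4
      have h4 : t' x = t x := by
        rcases hT x (by omega) with h5 | h5 <;> omega
      exact ih _ _ _ _ (by omega) (hinv.next h3 h4) h
    · have h3 : t' x < 3 * k := by by_contra hcon; rw [if_neg hcon] at c2; exact c2 rfl
      rw [e1, hinv.psi _ (hI.tlt x (by omega)), if_pos h3] at h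
      have := ble_false h
      exact ⟨x, by omega, hinv.eq, by rcases hT x (by omega) with h5 | h5 <;> omega⟩

lemma cmpGo_true {t t' φ : ℕ → ℕ} (hI : Iso t t' φ) (hc : Canon t') {T : ℕ}
    (hT : ∀ z < 24, dig T z = t z + 1)
    (fuel : ℕ) : ∀ x k phi psi, x + fuel = 24 → CmpInv t t' φ x k phi psi →
      cmpGo T fuel x k phi psi = true → ¬ Llt t' t := by
  induction fuel with
  | zero =>
    rintro x k phi psi h1 hinv - ⟨y, hy, h2, h3⟩
    have := hinv.eq y (by omega)
    omega
  | succ f ih =>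
    intro x k phi psi hxf hinv h
    obtain ⟨hx, hx'⟩ := hinv.x_lt hc (by omega)
    have hlast : t x < t' x → ¬ Llt t' t := by
      rintro h1 ⟨y, hy, h2, h3⟩
      rcases lt_trichotomy x y with h | h | h
      · have := h2 x h; omega
      · subst h; omega
      · have := hinv.eq y h; omega
    rw [cmpGo_succ, hinv.phi x (by omega), if_pos hx] at h
    have hφ := hI.lt x (by omega)
    have hTx := hT x (by omega)
    split_ifs at h with c1 c2 c3 c4
    · rw [hT _ hφ] at c1; omega
    all_goals have c1' := hT _ hφ
    all_goals have e1 : dig T (φ x) - 1 = φ (t' x) := by rw [c1', hI.ht x (by omega)]; omega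
    all_goals rw [e1, hinv.psi _ (hI.tlt x (by omega))] at c2
    · have h3 : t' x = 3 * k := by split_ifs at c2; omega
      rw [addVert_eq, e1, h3] at h
      exact ih _ _ _ _ (by omega) (hinv.add hI (by omega) h3 (by omega)) h
    · have h3 : t' x = 3 * k := by split_ifs at c2; omega
      have := Nat.le_of_ble_eq_true h
      exact hlast (by omega)
    · rw [e1, hinv.psi _ (hI.tlt x (by omega))] at c4
      have h3 : t' x < 3 * k := by by_contra hcon; rw [if_neg hcon] at c2; exact c2 rfl
      rw [if_pos h3] at c4
      exact ih _ _ _ _ (by omega) (hinv.next h3 (by omega)) h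
    · have h3 : t' x < 3 * k := by by_contra hcon; rw [if_neg hcon] at c2; exact c2 rfl
      rw [e1, hinv.psi _ (hI.tlt x (by omega)), if_pos h3] at h c4
      have := Nat.le_of_ble_eq_true h
      exact hlast (by omega)

lemma init_inv {t t' φ : ℕ → ℕ} (hI : Iso t t' φ) :
    CmpInv t t' φ 0 1 (0 + phiBlock 0 (φ 0) (u0 (φ 0)) (u0 (u0 (φ 0))))
      (0 + psiBlock 0 (φ 0) (u0 (φ 0)) (u0 (u0 (φ 0)))) := by
  obtain ⟨b1, b2⟩ := block_inv hI (k := 0) (phi := 0) (psi := 0) (by omega)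
    (by intro i _; rw [dig_zero]; simp) (by intro i _; rw [dig_zero]; simp)
  exact ⟨rfl, by intro i hi; omega, b1, b2⟩

lemma exists_iso {X : Type*} {s u : X → X} {t t' : ℕ → ℕ} {l l' : ℕ → X} (h : Lab s u t l)
    (h' : Lab s u t' l') : ∃ φ, Iso t t' φ ∧ ∀ i < 24, l (φ i) = l' i := by
  choose φ hφ hl using fun i => h.surj (l' i)
  refine ⟨φ, ⟨fun i _ => hφ i, ?_, ?_, ?_, h'.lt⟩, fun i _ => hl i⟩
  · intro i hi j hj hij
    apply h'.inj i hi j hj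
    rw [← hl i, ← hl j, hij]
  · intro i hi
    apply h.inj _ (hφ _) _ (u0_lt _ (hφ _))
    rw [hl, h'.hu i hi, h.hu _ (hφ _), hl]
  · intro i hi
    apply h.inj _ (hφ _) _ (h.lt _ (hφ _))
    rw [hl, h'.hs i hi, h.hs _ (hφ _), hl]

lemma allBelow_iff (f : ℕ → Bool) (n : ℕ) : allBelow f n = true ↔ ∀ i < n, f i = true := by
  induction n with
  | zero => simp [allBelow]
  | succ n ih =>
    have : allBelow f (n + 1) = Bool.rec (motive := fun _ => Bool) false (allBelow f n) (f n) := rfl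
    rw [this]
    cases hf : f n with
    | false =>
      simp only [Bool.false_eq_true, false_iff, not_forall]
      exact ⟨n, by omega, by simp [hf]⟩
    | true =>
      simp only [ih]
      constructor
      · intro h i hi
        rcases Nat.lt_succ_iff_lt_or_eq.1 hi with hi' | rfl
        · exact h i hi'
        · exact hf
      · intro h i hi
        exact h i (by omega)

/-- the minimal canonical table passes the test together with all its parts -/
theorem exists_min {X : Type*} {s u : X → X} (hD : Dat s u) :
    ∃ t l, Lab s u t l ∧ Canon t ∧ ∀ T, SubTab T t → isMin T = true := by
  have hfin : Finite X := Nat.finite_of_card_ne_zero (by rw [hD.card]; norm_num)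
  have hne : Nonempty X := (Nat.card_pos_iff.1 (by rw [hD.card]; norm_num)).1
  choose t l hL hC h0 using fun x => exists_canon hD x
  let r : X → X → Prop := fun y x => Llt (t y) (t x)
  haveI : IsTrans X r := ⟨fun a b c h1 h2 => h1.trans h2⟩
  haveI : Std.Irrefl r := ⟨fun a => Llt.irrefl _⟩
  have wf : WellFounded r := Finite.wellFounded_of_trans_of_irrefl r
  obtain ⟨x, -, hx⟩ := wf.has_min Set.univ Set.univ_nonempty
  refine ⟨t x, l x, hL x, hC x, fun T hT => ?_⟩
  rw [isMin, allBelow_iff]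
  intro d hd
  by_contra hcon
  rw [Bool.not_eq_true] at hcon
  obtain ⟨φ, hI, hφ⟩ := exists_iso (hL x) (hL (l x d))
  have hφ0 : φ 0 = d := by
    apply (hL x).inj _ (hI.lt 0 (by omega)) _ hd
    rw [hφ 0 (by omega), h0]
  rw [cmpRoot, addVert_eq, ← hφ0] at hcon
  exact hx (l x d) (Set.mem_univ _)
    (cmpGo_false hI (hC _) hT 24 0 1 _ _ (by omega) (init_inv hI) hcon)

theorem isMin_le {X : Type*} {s u : X → X} {t t' : ℕ → ℕ} {l l' : ℕ → X} (h : Lab s u t l)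
    (h' : Lab s u t' l') (hc : Canon t') {T : ℕ} (hT : ∀ z < 24, dig T z = t z + 1)
    (hm : isMin T = true) : ¬ Llt t' t := by
  obtain ⟨φ, hI, hφ⟩ := exists_iso h h'
  rw [isMin, allBelow_iff] at hm
  have := hm (φ 0) (hI.lt 0 (by omega))
  rw [cmpRoot, addVert_eq] at this
  exact cmpGo_true hI hc hT 24 0 1 _ _ (by omega) (init_inv hI) this

/-! ### Invariant functions and planarity -/

section planar
open Equiv

/-- the two-valued functions invariant under a permutation -/
def Wf {α : Type*} [Fintype α] [DecidableEq α] (p : Perm α) : Finset (α → Bool) :=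
  Finset.univ.filter fun f => ∀ z, f (p z) = f z

lemma mem_Wf {α : Type*} [Fintype α] [DecidableEq α] (p : Perm α) (f : α → Bool) :
    f ∈ Wf p ↔ ∀ z, f (p z) = f z := by simp [Wf]

lemma Wf_swap {α : Type*} [Fintype α] [DecidableEq α] (p : Perm α) (x y : α) (f : α → Bool)
    (h : f x = f y) : f ∈ Wf (swap x y * p) ↔ f ∈ Wf p := by
  rw [mem_Wf, mem_Wf]
  have : ∀ z, f (swap x y z) = f z := by
    intro z
    by_cases h1 : z = x
    · rw [h1, swap_apply_left, h]
    · by_cases h2 : z = y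
      · rw [h2, swap_apply_right, h]
      · rw [swap_apply_of_ne_of_ne h1 h2]
  simp only [Perm.mul_apply, this]

lemma Wf_xor {α : Type*} [Fintype α] [DecidableEq α] (p : Perm α) {f g : α → Bool}
    (hf : f ∈ Wf p) (hg : g ∈ Wf p) : (fun z => xor (f z) (g z)) ∈ Wf p := by
  rw [mem_Wf] at *
  intro z
  simp only [hf z, hg z]

lemma xor_inj {α : Type*} (g : α → Bool) :
    Function.Injective (fun (f : α → Bool) z => xor (f z) (g z)) := by
  intro a b h
  funext z
  have := congrFun h z
  simpa using this

lemma Wf_le {α : Type*} [Fintype α] [DecidableEq α] (p : Perm α) (x y : α) :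
    (Wf (swap x y * p)).card ≤ 2 * (Wf p).card := by
  rw [← Finset.card_filter_add_card_filter_not (s := Wf (swap x y * p)) (fun f => f x = f y)]
  have h1 : ((Wf (swap x y * p)).filter (fun f => f x = f y)).card ≤ (Wf p).card := by
    apply Finset.card_le_card
    intro f hf
    rw [Finset.mem_filter] at hf
    exact (Wf_swap p x y f hf.2).1 hf.1
  have h2 : ((Wf (swap x y * p)).filter (fun f => ¬ f x = f y)).card ≤ (Wf p).card := by
    rcases Finset.eq_empty_or_nonempty ((Wf (swap x y * p)).filter (fun f => ¬ f x = f y)) with h | h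
    · rw [h]; simp
    · obtain ⟨g, hg⟩ := h
      rw [Finset.mem_filter] at hg
      apply Finset.card_le_card_of_injOn (fun f z => xor (f z) (g z))
      · intro f hf
        rw [Finset.mem_coe, Finset.mem_filter] at hf
        refine (Wf_swap p x y _ ?_).1 (Wf_xor _ hf.1 hg.1)
        have a := hf.2
        have b := hg.2
        show xor (f x) (g x) = xor (f y) (g y)
        revert a b
        cases f x <;> cases f y <;> cases g x <;> cases g y <;> simp
      · exact (xor_inj g).injOn
  omega

lemma Wf_merge {α : Type*} [Fintype α] [DecidableEq α] (p : Perm α) (x y : α) (χ f : α → Bool)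
    (hχ : χ ∈ Wf p) (hxy : χ x ≠ χ y) (hf : f ∈ Wf (swap x y * p)) : f x = f y := by
  rw [mem_Wf] at *
  have hpow : ∀ n : ℕ, χ ((p ^ n) y) = χ y := by
    intro n
    induction n with
    | zero => simp
    | succ n ih => rw [pow_succ', Perm.mul_apply, hχ, ih]
  have hne : ∀ n : ℕ, (p ^ n) y ≠ x := by
    intro n h
    have := hpow n
    rw [h] at this
    exact hxy this
  have hex : ∃ n : ℕ, (p ^ (n + 1)) y = y := by
    refine ⟨orderOf p - 1, ?_⟩
    rw [Nat.sub_add_cancel (orderOf_pos p), pow_orderOf_eq_one]; rfl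
  classical
  have hmin : ∀ i ≤ Nat.find hex, f ((p ^ i) y) = f y := by
    intro i
    induction i with
    | zero => intro _; simp
    | succ i ih =>
      intro hi
      have h1 := Nat.find_min hex (m := i) (by omega)
      rw [← ih (by omega), ← hf ((p ^ i) y), Perm.mul_apply, ← Perm.mul_apply p, ← pow_succ',
        swap_apply_of_ne_of_ne (hne _) h1]
  have h2 := Nat.find_spec hex
  have h3 := hf ((p ^ (Nat.find hex)) y)
  rw [hmin _ le_rfl, Perm.mul_apply, ← Perm.mul_apply p, ← pow_succ', h2, swap_apply_right] at h3
  exact h3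

lemma Wf_lt {α : Type*} [Fintype α] [DecidableEq α] (p : Perm α) (x y : α) (χ : α → Bool)
    (hχ : χ ∈ Wf p) (hxy : χ x ≠ χ y) : 2 * (Wf (swap x y * p)).card ≤ (Wf p).card := by
  rw [← Finset.card_filter_add_card_filter_not (s := Wf p) (fun f => f x = f y)]
  have h0 : ∀ f ∈ Wf (swap x y * p), f x = f y := fun f hf => Wf_merge p x y χ f hχ hxy hf
  have h1 : (Wf (swap x y * p)).card ≤ ((Wf p).filter (fun f => f x = f y)).card := by
    apply Finset.card_le_card
    intro f hf
    rw [Finset.mem_filter]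
    exact ⟨(Wf_swap p x y f (h0 f hf)).1 hf, h0 f hf⟩
  have h2 : (Wf (swap x y * p)).card ≤ ((Wf p).filter (fun f => ¬ f x = f y)).card := by
    apply Finset.card_le_card_of_injOn (fun f z => xor (f z) (χ z))
    · intro f hf
      have e := h0 f hf
      rw [Finset.mem_coe, Finset.mem_filter]
      refine ⟨Wf_xor _ ((Wf_swap p x y f e).1 hf) hχ, ?_⟩
      simp only [e]
      revert hxy
      cases χ x <;> cases χ y <;> cases f y <;> simp
    · exact (xor_inj χ).injOn
  omega

/-- fixed point free involutions on the labels -/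
structure Tab (t : ℕ → ℕ) : Prop where
  lt : ∀ i < 24, t i < 24
  inv : ∀ i < 24, t (t i) = i
  ne : ∀ i < 24, t i ≠ i

def tF {t : ℕ → ℕ} (h : Tab t) (z : Fin 24) : Fin 24 := ⟨t z, h.lt z z.2⟩

lemma tF_inv {t : ℕ → ℕ} (h : Tab t) (z : Fin 24) : tF h (tF h z) = z :=
  Fin.ext (h.inv z z.2)

def sFun {t : ℕ → ℕ} (h : Tab t) (x : ℕ) (z : Fin 24) : Fin 24 :=
  if z.1 < x ∨ t z < x then tF h z else z

lemma sFun_inv {t : ℕ → ℕ} (h : Tab t) (x : ℕ) : Function.Involutive (sFun h x) := by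
  intro z
  unfold sFun
  by_cases hz : z.1 < x ∨ t z < x
  · rw [if_pos hz, if_pos, tF_inv]
    show t z < x ∨ t (t z) < x
    rw [h.inv z z.2]; exact hz.symm
  · rw [if_neg hz, if_neg hz]

def sPerm {t : ℕ → ℕ} (h : Tab t) (x : ℕ) : Perm (Fin 24) := (sFun_inv h x).toPerm

def uPerm : Perm (Fin 24) where
  toFun z := ⟨u0 z, u0_lt z z.2⟩
  invFun z := ⟨u0 (u0 z), u0_lt _ (u0_lt z z.2)⟩
  left_inv z := Fin.ext (u0_cube z z.2)
  right_inv z := Fin.ext (u0_cube z z.2)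

def pPerm {t : ℕ → ℕ} (h : Tab t) (x : ℕ) : Perm (Fin 24) := sPerm h x * uPerm

lemma sPerm_apply {t : ℕ → ℕ} (h : Tab t) (x : ℕ) (z : Fin 24) :
    sPerm h x z = if z.1 < x ∨ t z < x then tF h z else z := rfl

lemma pPerm_apply {t : ℕ → ℕ} (h : Tab t) (x : ℕ) (z : Fin 24) :
    pPerm h x z = sPerm h x (uPerm z) := rfl

lemma sPerm_old {t : ℕ → ℕ} (h : Tab t) (x : ℕ) (hx : x < 24) (hlt : t x < x) :
    sPerm h (x + 1) = sPerm h x := by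
  ext1 z
  rw [sPerm_apply, sPerm_apply]
  have : (z.1 < x + 1 ∨ t z < x + 1) ↔ (z.1 < x ∨ t z < x) := by
    constructor
    · intro hz
      by_contra hcon
      have : z.1 = x ∨ t z = x := by omega
      rcases this with e | e
      · rw [e] at hcon; omega
      · have := h.inv z z.2
        rw [e] at this; omega
    · intro hz; omega
  simp only [this]

lemma sPerm_new {t : ℕ → ℕ} (h : Tab t) (x : ℕ) (hx : x < 24) (hlt : x < t x) :
    sPerm h (x + 1) = swap ⟨x, hx⟩ ⟨t x, h.lt x hx⟩ * sPerm h x := by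
  ext1 z
  rw [Perm.mul_apply, sPerm_apply, sPerm_apply]
  have htt := h.inv x hx
  have hzz := h.inv z z.2
  by_cases h1 : z.1 = x
  · have : z = ⟨x, hx⟩ := Fin.ext h1
    subst this
    rw [if_pos (by omega), if_neg (by simp only; omega), swap_apply_left]; rfl
  · by_cases h2 : z.1 = t x
    · have : z = ⟨t x, h.lt x hx⟩ := Fin.ext h2
      subst this
      rw [if_pos (by simp only; omega), if_neg (by simp only; omega), swap_apply_right]
      exact Fin.ext htt
    · have h3 : t z ≠ x := by intro e; rw [e] at hzz; omega
      have h4 : t z ≠ t x := by intro e; rw [e] at hzz; omega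
      by_cases hz : z.1 < x ∨ t z < x
      · rw [if_pos (by omega), if_pos hz, swap_apply_of_ne_of_ne]
        · intro e; exact h3 (congrArg Fin.val e)
        · intro e; exact h4 (congrArg Fin.val e)
      · rw [if_neg (by omega), if_neg hz, swap_apply_of_ne_of_ne]
        · intro e; exact h1 (congrArg Fin.val e)
        · intro e; exact h2 (congrArg Fin.val e)

/-- number of matched darts -/
def mCard (t : ℕ → ℕ) (x : ℕ) : ℕ :=
  ((Finset.univ : Finset (Fin 24)).filter fun z : Fin 24 => z.1 < x ∨ t z < x).card

lemma mCard_le (t : ℕ → ℕ) (x : ℕ) : mCard t x ≤ 24 := by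
  have := Finset.card_filter_le (Finset.univ : Finset (Fin 24)) fun z : Fin 24 => z.1 < x ∨ t z < x
  simpa [mCard] using this

lemma mCard_zero (t : ℕ → ℕ) : mCard t 0 = 0 := by simp [mCard]

lemma mCard_end (t : ℕ → ℕ) : mCard t 24 = 24 := by
  simp [mCard]

lemma mCard_old {t : ℕ → ℕ} (h : Tab t) (x : ℕ) (hx : x < 24) (hlt : t x < x) :
    mCard t (x + 1) = mCard t x := by
  unfold mCard
  congr 1
  ext z
  simp only [Finset.mem_filter, Finset.mem_univ, true_and]
  constructor
  · intro hz
    by_contra hcon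
    have : z.1 = x ∨ t z = x := by omega
    rcases this with e | e
    · rw [e] at hcon; omega
    · have := h.inv z z.2
      rw [e] at this; omega
  · intro hz; omega

lemma mCard_new {t : ℕ → ℕ} (h : Tab t) (x : ℕ) (hx : x < 24) (hlt : x < t x) :
    mCard t (x + 1) = mCard t x + 2 := by
  unfold mCard
  have htt := h.inv x hx
  have : (Finset.univ : Finset (Fin 24)).filter (fun z : Fin 24 => z.1 < x + 1 ∨ t z < x + 1) =
      insert ⟨x, hx⟩ (insert ⟨t x, h.lt x hx⟩
        ((Finset.univ : Finset (Fin 24)).filter fun z : Fin 24 => z.1 < x ∨ t z < x)) := by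
    ext z
    have hzz := h.inv z z.2
    simp only [Finset.mem_filter, Finset.mem_univ, true_and, Finset.mem_insert, Fin.ext_iff]
    constructor
    · intro hz
      by_contra hcon
      have : t z = x := by omega
      rw [this] at hzz
      omega
    · rintro (e | e | e)
      · omega
      · rw [e]; omega
      · omega
  rw [this, Finset.card_insert_of_notMem, Finset.card_insert_of_notMem]
  · simp only [Finset.mem_filter, Finset.mem_univ, true_and]; omega
  · simp only [Finset.mem_filter, Finset.mem_univ, true_and, Finset.mem_insert, Fin.ext_iff]; omega

/-- the potential -/
def pot {t : ℕ → ℕ} (h : Tab t) (x : ℕ) : ℕ :=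
  (Wf (pPerm h x)).card ^ 2 * 16 ^ Kf t x * 2 ^ (24 - mCard t x)

lemma canon_lt {t : ℕ → ℕ} (hc : Canon t) {x z : ℕ} (hx : x ≤ 24) (hz : z < x) :
    t z < 3 * Kf t x := by
  have h1 := (hc.1 z (by omega)).2
  have h2 : Kf t (z + 1) ≤ Kf t x := Kf_mono t hz
  rw [Kf] at h2
  split_ifs at h2 <;> omega

lemma fresh {t : ℕ → ℕ} (h : Tab t) (hc : Canon t) {x z : ℕ} (hx : x < 24) (hz : z < 24)
    (hk : 3 * Kf t x ≤ z) : ¬ (z < x ∨ t z < x) := by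
  have h1 := (hc.1 x hx).1
  rintro (h2 | h2)
  · omega
  · have := canon_lt hc (by omega) h2
    rw [h.inv z hz] at this
    omega

lemma tree_sep {t : ℕ → ℕ} (h : Tab t) (hc : Canon t) (x : ℕ) (hx : x < 24)
    (he : t x = 3 * Kf t x) :
    2 * (Wf (swap ⟨x, hx⟩ ⟨t x, h.lt x hx⟩ * pPerm h x)).card ≤ (Wf (pPerm h x)).card := by
  have hlt := h.lt x hx
  have hx3 := (hc.1 x hx).1
  apply Wf_lt _ _ _ (fun z => decide (z.1 / 3 = Kf t x))
  · rw [mem_Wf]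
    intro z
    rw [decide_eq_decide]
    have hu : (uPerm z).1 / 3 = z.1 / 3 := by
      show u0 z / 3 = _
      rw [u0_eq z z.2]; split_ifs <;> omega
    rw [← hu, pPerm_apply]
    generalize uPerm z = w
    rw [sPerm_apply]
    by_cases hw : w.1 < x ∨ t w < x
    · rw [if_pos hw]
      show t w / 3 = _ ↔ _
      have h1 : w.1 < 3 * Kf t x := by
        by_contra hcon
        exact fresh h hc hx w.2 (by omega) hw
      have h2 : t w < 3 * Kf t x := by
        by_contra hcon
        refine fresh h hc hx (h.lt w w.2) (by omega) ?_
        rw [h.inv w w.2]; exact hw.symm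
      omega
    · rw [if_neg hw]
  · simp only [ne_eq, decide_eq_decide]
    omega

lemma pot_step {t : ℕ → ℕ} (h : Tab t) (hc : Canon t) (x : ℕ) (hx : x < 24) :
    pot h (x + 1) ≤ pot h x ∧
    (x < t x → t x < 3 * Kf t x → ¬ (pPerm h x).SameCycle ⟨x, hx⟩ ⟨t x, h.lt x hx⟩ →
      16 * pot h (x + 1) ≤ pot h x) := by
  have hlt := h.lt x hx
  obtain ⟨hx3, hx4⟩ := hc.1 x hx
  have hml := mCard_le t (x + 1)
  rcases Nat.lt_or_gt_of_ne (h.ne x hx) with h1 | h1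
  · constructor
    · unfold pot pPerm
      rw [sPerm_old h x hx h1, mCard_old h x hx h1, Kf, if_neg (by omega)]
    · omega
  · have hm := mCard_new h x hx h1
    obtain ⟨r, hr⟩ : ∃ r, 24 - mCard t x = r + 2 := ⟨22 - mCard t x, by omega⟩
    have hr' : 24 - mCard t (x + 1) = r := by omega
    have hp : pPerm h (x + 1) = swap ⟨x, hx⟩ ⟨t x, h.lt x hx⟩ * pPerm h x := by
      unfold pPerm
      rw [sPerm_new h x hx h1, mul_assoc]
    unfold pot
    rw [hr, hr', hp]
    by_cases h2 : t x = 3 * Kf t x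
    · constructor
      · have h3 := tree_sep h hc x hx h2
        rw [Kf, if_pos h2]
        generalize (Wf (swap ⟨x, hx⟩ ⟨t x, h.lt x hx⟩ * pPerm h x)).card = n' at *
        generalize (Wf (pPerm h x)).card = n at *
        have : (2 * n') ^ 2 ≤ n ^ 2 := Nat.pow_le_pow_left h3 2
        calc n' ^ 2 * 16 ^ (Kf t x + 1) * 2 ^ r = (2 * n') ^ 2 * (16 ^ Kf t x * 2 ^ (r + 2)) := by ring
          _ ≤ n ^ 2 * (16 ^ Kf t x * 2 ^ (r + 2)) := Nat.mul_le_mul_right _ this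
          _ = _ := by ring
      · omega
    · rw [Kf, if_neg h2]
      constructor
      · have h3 := Wf_le (pPerm h x) ⟨x, hx⟩ ⟨t x, h.lt x hx⟩
        generalize (Wf (swap ⟨x, hx⟩ ⟨t x, h.lt x hx⟩ * pPerm h x)).card = n' at *
        generalize (Wf (pPerm h x)).card = n at *
        have : n' ^ 2 ≤ (2 * n) ^ 2 := Nat.pow_le_pow_left h3 2
        calc n' ^ 2 * 16 ^ (Kf t x) * 2 ^ r = n' ^ 2 * (16 ^ Kf t x * 2 ^ r) := by ring
          _ ≤ (2 * n) ^ 2 * (16 ^ Kf t x * 2 ^ r) := Nat.mul_le_mul_right _ this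
          _ = _ := by ring
      · intro _ _ hsc
        classical
        have h3 := Wf_lt (pPerm h x) ⟨x, hx⟩ ⟨t x, h.lt x hx⟩
          (fun z => decide ((pPerm h x).SameCycle ⟨x, hx⟩ z))
          (by
            rw [mem_Wf]; intro z
            rw [decide_eq_decide]
            exact Perm.sameCycle_apply_right)
          (by
            simp only [ne_eq, decide_eq_decide]
            intro hh
            exact hsc (hh.1 (Perm.SameCycle.refl _ _)))
        generalize (Wf (swap ⟨x, hx⟩ ⟨t x, h.lt x hx⟩ * pPerm h x)).card = n' at *
        generalize (Wf (pPerm h x)).card = n at *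
        have : (2 * n') ^ 2 ≤ n ^ 2 := Nat.pow_le_pow_left h3 2
        calc 16 * (n' ^ 2 * 16 ^ (Kf t x) * 2 ^ r) = (2 * n') ^ 2 * (16 ^ Kf t x * 2 ^ (r + 2)) := by ring
          _ ≤ n ^ 2 * (16 ^ Kf t x * 2 ^ (r + 2)) := Nat.mul_le_mul_right _ this
          _ = _ := by ring

lemma Wf_start {t : ℕ → ℕ} (h : Tab t) : (Wf (pPerm h 0)).card ≤ 256 := by
  have hc : (Finset.univ : Finset (Fin 8 → Bool)).card = 256 := by simp
  rw [← hc]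
  apply Finset.card_le_card_of_injOn (fun f (i : Fin 8) => f ⟨3 * i.1, by omega⟩)
  · intro f _; simp
  · intro f hf g hg hfg
    rw [Finset.mem_coe, mem_Wf] at hf hg
    have e : ∀ z, pPerm h 0 z = uPerm z := by
      intro z; rw [pPerm_apply, sPerm_apply, if_neg (by omega)]
    have blk : ∀ f : Fin 24 → Bool, (∀ z, f (pPerm h 0 z) = f z) → ∀ z : Fin 24,
        f z = f ⟨3 * (z.1 / 3), by omega⟩ := by
      intro f hf z
      have hk : z.1 / 3 < 8 := by omega
      have a1 := hf ⟨3 * (z.1 / 3), by omega⟩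
      have a2 := hf ⟨3 * (z.1 / 3) + 1, by omega⟩
      have b1 : uPerm ⟨3 * (z.1 / 3), by omega⟩ = ⟨3 * (z.1 / 3) + 1, by omega⟩ :=
        Fin.ext (u0_a _ hk)
      have b2 : uPerm ⟨3 * (z.1 / 3) + 1, by omega⟩ = ⟨3 * (z.1 / 3) + 2, by omega⟩ :=
        Fin.ext (u0_b _ hk)
      rw [e, b1] at a1
      rw [e, b2] at a2
      rcases (by omega : z.1 = 3 * (z.1 / 3) ∨ z.1 = 3 * (z.1 / 3) + 1 ∨ z.1 = 3 * (z.1 / 3) + 2)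
        with c | c | c
      · exact congrArg f (Fin.ext c)
      · rw [← a1]; exact congrArg f (Fin.ext c)
      · rw [← a1, ← a2]; exact congrArg f (Fin.ext c)
    funext z
    rw [blk f hf z, blk g hg z]
    exact congrFun hfg ⟨z.1 / 3, by omega⟩

theorem planar_same {t : ℕ → ℕ} (h : Tab t) (hc : Canon t) (hpl : 64 ≤ (Wf (pPerm h 24)).card)
    (x : ℕ) (hx : x < 24) (h1 : x < t x) (h2 : t x < 3 * Kf t x) :
    (pPerm h x).SameCycle ⟨x, hx⟩ ⟨t x, h.lt x hx⟩ := by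
  by_contra hcon
  have h3 := (pot_step h hc x hx).2 h1 h2 hcon
  have up : ∀ y ≤ 24, pot h y ≤ pot h 0 := by
    intro y
    induction y with
    | zero => intro _; exact le_rfl
    | succ y ih => intro hy; exact ((pot_step h hc y (by omega)).1).trans (ih (by omega))
  have down : ∀ y ≤ 24, x + 1 ≤ y → pot h y ≤ pot h (x + 1) := by
    intro y hy hxy
    induction y, hxy using Nat.le_induction with
    | base => exact le_rfl
    | succ y hy' ih => exact ((pot_step h hc y (by omega)).1).trans (ih (by omega))
  have a1 := up x (by omega)
  have a2 := down 24 le_rfl (by omega)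
  have a3 : pot h 0 ≤ 2 ^ 44 := by
    unfold pot
    rw [mCard_zero, Kf]
    have := Nat.pow_le_pow_left (Wf_start h) 2
    omega
  have a4 : 2 ^ 44 ≤ pot h 24 := by
    unfold pot
    rw [mCard_end, hc.2]
    have := Nat.pow_le_pow_left hpl 2
    omega
  omega

end planar

/-! ### Completeness of the search -/

lemma around_succ (T x : ℕ) (child : ℕ → Bool) (f e : ℕ) : around T x child (f + 1) e =
    if u0 e = x then true else
      if dig T (u0 e) = 0 then
        Bool.rec (motive := fun _ => Bool) false (around T x child f (u0 e)) (child (u0 e))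
      else around T x child f (dig T (u0 e) - 1) := by
  show (force (u0 e) fun y => force (dig T y) fun z1 =>
      Bool.rec (motive := fun _ => Bool)
        (Bool.rec (motive := fun _ => Bool)
          (around T x child f (Nat.pred z1))
          (Bool.rec (motive := fun _ => Bool) false (around T x child f y) (child y))
          (Nat.beq z1 0))
        true
        (Nat.beq y x)) = _
  simp only [force_eq, brec_beq]
  rfl

lemma around_spec (T x : ℕ) (child : ℕ → Bool) (q : Equiv.Perm (Fin 24)) (hx : dig T x = 0)
    (h0 : ∀ z : Fin 24, dig T (u0 z) = 0 → (q z).1 = u0 z)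
    (h1 : ∀ z : Fin 24, dig T (u0 z) ≠ 0 → (q z).1 = dig T (u0 z) - 1 ∧ dig T (q z) ≠ 0)
    (fuel : ℕ) : ∀ (e : Fin 24) (n : ℕ), around T x child fuel e = true →
      (∀ i ≤ n, ((q ^ (i + 1)) e).1 ≠ x) → dig T ((q ^ (n + 1)) e) = 0 →
      child ((q ^ (n + 1)) e) = true := by
  induction fuel with
  | zero => intro e n h; exact absurd h (by simp [around])
  | succ f ih =>
    intro e n h hne hd
    rw [around_succ] at h
    have hsh : ∀ i : ℕ, (q ^ (i + 1 + 1)) e = (q ^ (i + 1)) (q e) := by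
      intro i; rw [pow_succ _ (i + 1), Equiv.Perm.mul_apply]
    have hne0 : (q e).1 ≠ x := by simpa using hne 0 (Nat.zero_le _)
    split_ifs at h with c1 c2
    · exact absurd (by rw [h0 e (by rw [c1]; exact hx), c1]) hne0
    · have hq := h0 e c2
      cases hc : child (u0 e) with
      | false => rw [hc] at h; exact absurd h (by simp)
      | true =>
        rw [hc] at h
        cases n with
        | zero => simpa [hq] using hc
        | succ n =>
          rw [hsh] at hd ⊢
          refine ih (q e) n (by rw [hq]; exact h) ?_ hd
          intro i hi
          rw [← hsh]
          exact hne (i + 1) (by omega)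
    · obtain ⟨hq, hq2⟩ := h1 e c2
      cases n with
      | zero => exact absurd (by simpa using hd) hq2
      | succ n =>
        rw [hsh] at hd ⊢
        refine ih (q e) n (by rw [hq]; exact h) ?_ hd
        intro i hi
        rw [← hsh]
        exact hne (i + 1) (by omega)

lemma search_zero (l : List ℕ) (x k T : ℕ) : search l 0 x k T = leaf l T := rfl

lemma search_succ (l : List ℕ) (f x k T : ℕ) : search l (f + 1) x k T =
    if dig T x = 0 then
      if x + 1 ≤ 3 * k then
        Bool.rec (motive := fun _ => Bool)
            true
            (Bool.rec (motive := fun _ => Bool)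
              false
              (if k = 8 then true else search l f (x + 1) (k + 1) (join T x (3 * k)))
              (around T x (fun y => search l f (x + 1) k (join T x y)) 24 x))
            (if k = 6 then isMin T else true)
      else true
    else search l f (x + 1) k T := by
  show Bool.rec (motive := fun _ => Bool)
        (search l f (Nat.succ x) k T)
        (Bool.rec (motive := fun _ => Bool)
          true
          (Bool.rec (motive := fun _ => Bool)
            true
            (Bool.rec (motive := fun _ => Bool)
              false
              (Bool.rec (motive := fun _ => Bool)
                (force (join T x (Nat.mul 3 k)) (search l f (Nat.succ x) (Nat.succ k)))
                true
                (Nat.beq k 8))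
              (around T x (fun y => force (join T x y) (search l f (Nat.succ x) k)) 24 x))
            (Bool.rec (motive := fun _ => Bool) true (isMin T) (Nat.beq k 6)))
          (Nat.ble (Nat.succ x) (Nat.mul 3 k)))
        (Nat.beq (dig T x) 0) = _
  simp only [force_eq, brec_beq, brec_ble]
  rfl

lemma elemL_mem (T : ℕ) (l : List ℕ) (h : elemL T l = true) : T ∈ l := by
  induction l with
  | nil => exact absurd h (by simp [elemL])
  | cons a l ih =>
    have : elemL T (a :: l) = Bool.rec (motive := fun _ => Bool) (elemL T l) true (Nat.beq T a) := rfl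
    rw [this, brec_beq] at h
    split_ifs at h with c
    · rw [c]; exact List.mem_cons_self
    · exact List.mem_cons_of_mem _ (ih h)

lemma dig_join (T x y z : ℕ) (hx : dig T x = 0) (hy : dig T y = 0) (hxy : x ≠ y)
    (hx' : x < 24) (hy' : y < 24) :
    dig (join T x y) z = if z = x then y + 1 else if z = y then x + 1 else dig T z := by
  have : join T x y = T + putAt x (y + 1) + putAt y (x + 1) := (Nat.add_assoc _ _ _).symm
  rw [this, dig_put _ _ _ _ _ (by omega), dig_put _ _ _ _ hx (by omega)]
  · split_ifs <;> omega
  · rw [dig_put _ _ _ _ hx (by omega), if_neg hxy.symm, hy]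

/-- the packed number `T` is the part of the table `t` known before the dart `x` is treated -/
def Known (t : ℕ → ℕ) (x T : ℕ) : Prop :=
  ∀ z < 24, dig T z = if z < x ∨ t z < x then t z + 1 else 0

lemma Known.sub {t : ℕ → ℕ} {x T : ℕ} (h : Known t x T) : SubTab T t := by
  intro z hz
  rw [h z hz]
  split_ifs <;> simp

lemma Known.old {t : ℕ → ℕ} (ht : Tab t) {x T : ℕ} (hx : x < 24) (h : Known t x T) (hlt : t x < x) :
    Known t (x + 1) T := by
  intro z hz
  rw [h z hz]
  have : (z < x + 1 ∨ t z < x + 1) ↔ (z < x ∨ t z < x) := by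
    constructor
    · intro hz'
      by_contra hcon
      have : z = x ∨ t z = x := by omega
      rcases this with e | e
      · rw [e] at hcon; omega
      · have := ht.inv z hz
        rw [e] at this; omega
    · intro hz; omega
  simp only [this]

lemma Known.new {t : ℕ → ℕ} (ht : Tab t) {x T : ℕ} (hx : x < 24) (h : Known t x T) (hlt : x < t x) :
    Known t (x + 1) (join T x (t x)) := by
  have htt := ht.inv x hx
  have htl := ht.lt x hx
  intro z hz
  rw [dig_join _ _ _ _ (by rw [h x hx, if_neg (by omega)])
    (by rw [h _ htl, if_neg (by omega)]) (by omega) hx htl]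
  by_cases h1 : z = x
  · subst h1
    rw [if_pos rfl, if_pos (by omega)]
  · rw [if_neg h1]
    by_cases h2 : z = t x
    · subst h2
      rw [if_pos rfl, if_pos (by omega), htt]
    · have hzz := ht.inv z hz
      have h3 : t z ≠ x := by intro e; rw [e] at hzz; omega
      rw [if_neg h2, h z hz]
      have : (z < x + 1 ∨ t z < x + 1) ↔ (z < x ∨ t z < x) := by omega
      simp only [this]

lemma brec_true {a b c : Bool} (h : Bool.rec (motive := fun _ => Bool) a b c = true)
    (hc : c = true) : b = true := by subst hc; exact h

theorem search_spec (l : List ℕ) {t : ℕ → ℕ} (ht : Tab t) (hc : Canon t)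
    (hpl : 64 ≤ (Wf (pPerm ht 24)).card) (hmin : ∀ T, SubTab T t → isMin T = true) (fuel : ℕ) :
    ∀ x T, x + fuel = 24 → Known t x T → search l fuel x (Kf t x) T = true →
      ∃ T' ∈ l, ∀ i < 24, dig T' i = t i + 1 := by
  induction fuel with
  | zero =>
    intro x T hx hT h
    rw [search_zero, leaf] at h
    refine ⟨T, elemL_mem _ _ (brec_true h (hmin T hT.sub)), ?_⟩
    intro i hi
    rw [hT i hi, if_pos (by omega)]
  | succ f ih =>
    intro x T hx hT h
    have hx' : x < 24 := by omega
    have hlt := ht.lt x hx'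
    obtain ⟨c1, c2⟩ := hc.1 x hx'
    rw [search_succ] at h
    rcases Nat.lt_or_gt_of_ne (ht.ne x hx') with h1 | h1
    · rw [if_neg (by rw [hT x hx', if_pos (by omega)]; omega)] at h
      refine ih (x + 1) T (by omega) (hT.old ht hx' h1) ?_
      rw [Kf, if_neg (by omega)]
      exact h
    · have hdx : dig T x = 0 := by rw [hT x hx', if_neg (by omega)]
      have hdy : dig T (t x) = 0 := by
        rw [hT _ hlt, if_neg]
        rw [ht.inv x hx']; omega
      rw [if_pos hdx, if_pos (by omega)] at h
      replace h := brec_true h (by rw [hmin T hT.sub]; simp)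
      have ha : around T x (fun y => search l f (x + 1) (Kf t x) (join T x y)) 24 x = true := by
        by_contra hcon
        rw [Bool.not_eq_true] at hcon
        rw [hcon] at h
        exact absurd h (by simp)
      replace h := brec_true h ha
      have hnew := hT.new ht hx' h1
      by_cases h2 : t x = 3 * Kf t x
      · rw [if_neg (by omega)] at h
        rw [h2] at hnew
        refine ih (x + 1) _ (by omega) hnew ?_
        rw [Kf, if_pos h2]
        exact h
      · refine ih (x + 1) _ (by omega) hnew ?_
        rw [Kf, if_neg h2]
        have hs := planar_same ht hc hpl x hx' h1 (by omega)
        obtain ⟨n, hn⟩ := hs.exists_nat_pow_eq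
        classical
        have hex : ∃ n : ℕ, ((pPerm ht x) ^ n) ⟨x, hx'⟩ = ⟨t x, hlt⟩ := ⟨n, hn⟩
        obtain ⟨m, hm⟩ : ∃ m, Nat.find hex = m + 1 := by
          refine ⟨Nat.find hex - 1, ?_⟩
          have : Nat.find hex ≠ 0 := by
            intro h0
            have := Nat.find_spec hex
            rw [h0, pow_zero] at this
            have := congrArg Fin.val this
            simp at this
            omega
          omega
        have hm1 := Nat.find_spec hex
        rw [hm] at hm1
        have key := around_spec T x (fun y => search l f (x + 1) (Kf t x) (join T x y)) (pPerm ht x)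
          hdx ?_ ?_ 24 ⟨x, hx'⟩ m ha ?_ ?_
        · rw [hm1] at key
          exact key
        · intro z hz
          rw [pPerm_apply, sPerm_apply, if_neg]
          · rfl
          · intro hcon
            replace hcon : u0 z < x ∨ t (u0 z) < x := hcon
            rw [hT _ (u0_lt z z.2), if_pos hcon] at hz
            omega
        · intro z hz
          have hcon : u0 z < x ∨ t (u0 z) < x := by
            by_contra hcon
            rw [hT _ (u0_lt z z.2), if_neg hcon] at hz
            exact hz rfl
          have e : (pPerm ht x z).1 = t (u0 z) := by
            have hcon' : (uPerm z).1 < x ∨ t (uPerm z) < x := hcon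
            rw [pPerm_apply, sPerm_apply, if_pos hcon']
            rfl
          rw [e, hT _ (u0_lt z z.2), if_pos hcon, hT _ (ht.lt _ (u0_lt z z.2)), if_pos]
          · omega
          · rw [ht.inv _ (u0_lt z z.2)]; exact hcon.symm
        · intro i hi e
          have hi' : i ≠ m := by
            intro he
            rw [he, hm1] at e
            simp only at e
            omega
          refine Nat.find_min hex (m := m + 1 - (i + 1)) (by omega) ?_
          rw [← hm1]
          have e' : ((pPerm ht x) ^ (i + 1)) ⟨x, hx'⟩ = ⟨x, hx'⟩ := Fin.ext e
          have : (pPerm ht x) ^ (m + 1) = (pPerm ht x) ^ (m + 1 - (i + 1)) * (pPerm ht x) ^ (i + 1) := by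
            rw [← pow_add]; congr 1; omega
          rw [this, Equiv.Perm.mul_apply, e']
        · rw [hm1]; exact hdy

lemma search_rep : search repList 24 0 1 0 = true := by decide +kernel

theorem rep_of_canon {t : ℕ → ℕ} (ht : Tab t) (hc : Canon t)
    (hpl : 64 ≤ (Wf (pPerm ht 24)).card) (hmin : ∀ T, SubTab T t → isMin T = true) :
    ∃ T ∈ repList, ∀ i < 24, dig T i = t i + 1 := by
  refine search_spec repList ht hc hpl hmin 24 0 0 rfl ?_ search_rep
  intro z _
  rw [dig_zero, if_neg (by omega)]

/-! ### Orbit counts -/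

lemma nOrb_free (Γ : Subgroup PSL2Z) (g : PSL2Z) (p : ℕ) (hp : p.Prime) (hg : g ≠ 1) (hgp : g ^ p = 1)
    (hfree : ∀ x : PSL2Z ⧸ Γ, g • x ≠ x) : Γ.index = nOrb g Γ * p := by
  have ho : orderOf g = p := by
    haveI := Fact.mk hp
    exact orderOf_eq_prime hgp hg
  have hcard : Nat.card (Subgroup.zpowers g) = p := by rw [Nat.card_zpowers, ho]
  haveI : Fact (Nat.Prime (Nat.card (Subgroup.zpowers g))) := ⟨by rw [hcard]; exact hp⟩
  have hst : ∀ b : PSL2Z ⧸ Γ, MulAction.stabilizer (Subgroup.zpowers g) b = ⊥ := by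
    intro b
    refine (Subgroup.eq_bot_or_eq_top_of_prime_card _).resolve_right ?_
    intro h
    have : (⟨g, Subgroup.mem_zpowers g⟩ : Subgroup.zpowers g) ∈
        MulAction.stabilizer (Subgroup.zpowers g) b := by rw [h]; trivial
    exact hfree b (MulAction.mem_stabilizer_iff.1 this)
  rw [Subgroup.index, Nat.card_congr (MulAction.selfEquivOrbitsQuotientProd hst), Nat.card_prod,
    hcard]
  rfl

lemma genus_iff (Γ : Subgroup PSL2Z) (hi : Γ.index = 24) (hs : ∀ x : PSL2Z ⧸ Γ, Sp • x ≠ x)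
    (hu : ∀ x : PSL2Z ⧸ Γ, Up • x ≠ x) : GenusZero Γ ↔ nOrb Tp Γ = 6 := by
  have h1 := nOrb_free Γ Sp 2 Nat.prime_two Sp_ne (by rw [pow_two]; exact Sp_sq) hs
  have h2 := nOrb_free Γ Up 3 Nat.prime_three Up_ne (by rw [pow_succ, pow_two]; exact Up_cube) hu
  unfold GenusZero
  show nOrb Sp Γ + nOrb Up Γ + nOrb Tp Γ = _ ↔ _
  omega

lemma Lab.tab {X : Type*} {s u : X → X} {t : ℕ → ℕ} {l : ℕ → X} (h : Lab s u t l)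
    (ss : ∀ x, s (s x) = x) (sne : ∀ x, s x ≠ x) : Tab t where
  lt := h.lt
  inv i hi := by
    apply h.inj _ (h.lt _ (h.lt i hi)) _ hi
    rw [h.hs _ (h.lt i hi), h.hs i hi, ss]
  ne i hi e := by
    apply sne (l i)
    rw [← h.hs i hi, e]

/-- labelling of the cosets of a subgroup -/
abbrev LabG (Γ : Subgroup PSL2Z) (t : ℕ → ℕ) (l : ℕ → PSL2Z ⧸ Γ) : Prop :=
  Lab (fun x : PSL2Z ⧸ Γ => Sp • x) (fun x : PSL2Z ⧸ Γ => Up • x) t l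

lemma Tp_lab {Γ : Subgroup PSL2Z} {t : ℕ → ℕ} {l : ℕ → PSL2Z ⧸ Γ} (h : LabG Γ t l) (i : ℕ)
    (hi : i < 24) : Tp • l i = l (t (u0 i)) := by
  rw [h.hs _ (u0_lt i hi), h.hu i hi, Tp_eq, mul_smul]

lemma pPerm_val {t : ℕ → ℕ} (h : Tab t) (z : Fin 24) : (pPerm h 24 z).1 = t (u0 z) := by
  have := u0_lt z z.2
  have hc : (uPerm z).1 < 24 ∨ t (uPerm z) < 24 := Or.inl this
  rw [pPerm_apply, sPerm_apply, if_pos hc]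
  rfl

lemma Tp_lab' {Γ : Subgroup PSL2Z} {t : ℕ → ℕ} {l : ℕ → PSL2Z ⧸ Γ} (h : LabG Γ t l) (ht : Tab t)
    (z : Fin 24) : Tp • l z = l (pPerm ht 24 z) := by
  rw [pPerm_val, Tp_lab h z z.2]

lemma Tp_pow_lab {Γ : Subgroup PSL2Z} {t : ℕ → ℕ} {l : ℕ → PSL2Z ⧸ Γ} (h : LabG Γ t l) (ht : Tab t)
    (n : ℕ) (z : Fin 24) : Tp ^ n • l z = l ((pPerm ht 24 ^ n) z) := by
  induction n with
  | zero => simp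
  | succ n ih => rw [pow_succ', mul_smul, ih, Tp_lab' h ht, pow_succ', Equiv.Perm.mul_apply]

lemma Tp_zpow_lab {Γ : Subgroup PSL2Z} {t : ℕ → ℕ} {l : ℕ → PSL2Z ⧸ Γ} (h : LabG Γ t l) (ht : Tab t)
    (n : ℤ) (z : Fin 24) : Tp ^ n • l z = l ((pPerm ht 24 ^ n) z) := by
  cases n with
  | ofNat n => simpa using Tp_pow_lab h ht n z
  | negSucc n =>
    rw [zpow_negSucc, zpow_negSucc, inv_smul_eq_iff, Tp_pow_lab h ht]
    simp

/-- the class of the label `z` -/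
def clsT {Γ : Subgroup PSL2Z} (l : ℕ → PSL2Z ⧸ Γ) (z : ℕ) :
    MulAction.orbitRel.Quotient (Subgroup.zpowers Tp) (PSL2Z ⧸ Γ) :=
  Quotient.mk (MulAction.orbitRel (Subgroup.zpowers Tp) (PSL2Z ⧸ Γ)) (l z)

lemma clsT_eq {Γ : Subgroup PSL2Z} {t : ℕ → ℕ} {l : ℕ → PSL2Z ⧸ Γ} (h : LabG Γ t l) (ht : Tab t)
    (z w : Fin 24) : clsT l z = clsT l w ↔ (pPerm ht 24).SameCycle w z := by
  unfold clsT
  rw [Quotient.eq, MulAction.orbitRel_apply]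
  constructor
  · rintro ⟨⟨g, n, rfl⟩, hg⟩
    refine ⟨n, ?_⟩
    have hg' : Tp ^ n • l w = l z := hg
    rw [Tp_zpow_lab h ht] at hg'
    exact Fin.ext (h.inj _ (Fin.is_lt _) _ z.2 hg')
  · rintro ⟨n, hn⟩
    refine ⟨⟨Tp ^ n, n, rfl⟩, ?_⟩
    show Tp ^ n • l w = l z
    rw [Tp_zpow_lab h ht, hn]

lemma clsT_surj {Γ : Subgroup PSL2Z} {t : ℕ → ℕ} {l : ℕ → PSL2Z ⧸ Γ} (h : LabG Γ t l)
    (q : MulAction.orbitRel.Quotient (Subgroup.zpowers Tp) (PSL2Z ⧸ Γ)) :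
    ∃ z : Fin 24, clsT l z = q := by
  induction q using Quotient.inductionOn with
  | h x =>
    obtain ⟨i, hi, rfl⟩ := h.surj x
    exact ⟨⟨i, hi⟩, rfl⟩

lemma Wf_card {Γ : Subgroup PSL2Z} {t : ℕ → ℕ} {l : ℕ → PSL2Z ⧸ Γ} (h : LabG Γ t l) (ht : Tab t)
    (h6 : nOrb Tp Γ = 6) : 64 ≤ (Wf (pPerm ht 24)).card := by
  classical
  unfold nOrb at h6
  haveI : Finite (MulAction.orbitRel.Quotient (Subgroup.zpowers Tp) (PSL2Z ⧸ Γ)) :=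
    Nat.finite_of_card_ne_zero (by rw [h6]; norm_num)
  haveI := Fintype.ofFinite (MulAction.orbitRel.Quotient (Subgroup.zpowers Tp) (PSL2Z ⧸ Γ))
  rw [Nat.card_eq_fintype_card] at h6
  have hc : (Finset.univ : Finset
      (MulAction.orbitRel.Quotient (Subgroup.zpowers Tp) (PSL2Z ⧸ Γ) → Bool)).card = 64 := by
    rw [Finset.card_univ, Fintype.card_fun, h6]; rfl
  rw [← hc]
  apply Finset.card_le_card_of_injOn (fun f (z : Fin 24) => f (clsT l z))
  · intro f _
    rw [Finset.mem_coe, mem_Wf]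
    intro z
    show f (clsT l _) = f (clsT l _)
    rw [(clsT_eq h ht _ _).2]
    exact (Equiv.Perm.sameCycle_apply_right).2 (Equiv.Perm.SameCycle.refl _ _)
  · intro f _ g _ hfg
    funext q
    obtain ⟨z, rfl⟩ := clsT_surj h q
    exact congrFun hfg z

lemma countBelow_eq (f : ℕ → Bool) (n : ℕ) :
    countBelow f n = Nat.card {k : ℕ // k < n ∧ f k = true} := by
  have hc : Nat.card {k : ℕ // k < n ∧ f k = true} = Nat.count (fun k => f k = true) n := by
    rw [@Nat.card_eq_fintype_card _ (Nat.CountSet.fintype (fun k => f k = true) n)]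
    exact (Nat.count_eq_card_fintype (fun k => f k = true) n).symm
  rw [hc]
  clear hc
  induction n with
  | zero => rfl
  | succ n ih =>
    have : countBelow f (n + 1) =
      Bool.rec (motive := fun _ => ℕ) (countBelow f n) (Nat.succ (countBelow f n)) (f n) := rfl
    rw [this, Nat.count_succ, ih]
    cases f n <;> simp

/-- the table stored in a packed number -/
def tab (T z : ℕ) : ℕ := dig T z - 1

lemma pf_eq (T d : ℕ) : pf T d = tab T (u0 d) := rfl

lemma walk_succ (T d f e : ℕ) : walk T d (f + 1) e =
    if d = e then true else if d ≤ e then walk T d f (pf T e) else false := by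
  show (force e fun e =>
      Bool.rec (motive := fun _ => Bool)
        (Bool.rec (motive := fun _ => Bool) false (walk T d f (pf T e)) (Nat.ble d e))
        true (Nat.beq d e)) = _
  simp only [force_eq, brec_beq, brec_ble]

lemma walk_of {T : ℕ} (ht : Tab (tab T)) (d : ℕ) (f : ℕ) : ∀ e : Fin 24,
    (∀ n : ℕ, d ≤ ((pPerm ht 24 ^ n) e).1) → walk T d f e = true := by
  induction f with
  | zero => intro e _; rfl
  | succ f ih =>
    intro e he
    have h0 : d ≤ e.1 := by simpa using he 0
    rw [walk_succ, if_pos h0]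
    have := ih (pPerm ht 24 e) (by
      intro n
      rw [← Equiv.Perm.mul_apply, ← pow_succ]
      exact he (n + 1))
    rw [pPerm_val, ← pf_eq] at this
    rw [this]; simp

lemma of_walk {T : ℕ} (ht : Tab (tab T)) (d : ℕ) (f : ℕ) : ∀ (e : Fin 24) (n : ℕ), n < f →
    walk T d f e = true → ((pPerm ht 24 ^ n) e).1 < d → ∃ m < n, ((pPerm ht 24 ^ m) e).1 = d := by
  induction f with
  | zero => intro e n hn; omega
  | succ f ih =>
    intro e n hn h hlt
    rw [walk_succ] at h
    split_ifs at h with c1 c2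
    · refine ⟨0, ?_, by simpa using c1.symm⟩
      rcases Nat.eq_zero_or_pos n with h0 | h0
      · rw [h0] at hlt; simp at hlt; omega
      · exact h0
    · cases n with
      | zero => simp at hlt; omega
      | succ n =>
        rw [pf_eq, ← pPerm_val ht] at h
        obtain ⟨m, hm, hm'⟩ := ih (pPerm ht 24 e) n (by omega) h (by
          rw [← Equiv.Perm.mul_apply, ← pow_succ]; exact hlt)
        refine ⟨m + 1, by omega, ?_⟩
        rw [pow_succ, Equiv.Perm.mul_apply]; exact hm'

lemma walk_iff {T : ℕ} (ht : Tab (tab T)) (d : Fin 24) :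
    walk T d 24 (pf T d) = true ↔ ∀ n : ℕ, d ≤ (pPerm ht 24 ^ n) d := by
  rw [pf_eq, ← pPerm_val ht]
  constructor
  · intro h
    by_contra hcon
    push Not at hcon
    classical
    have hN := Nat.find_spec hcon
    have hmin := fun m => Nat.find_min hcon (m := m)
    generalize Nat.find hcon = N at hN hmin
    cases N with
    | zero => simp at hN
    | succ N =>
      have hrep : ∀ i j : ℕ, i < j → j ≤ N + 1 → (pPerm ht 24 ^ i) d ≠ (pPerm ht 24 ^ j) d := by
        intro i j hij hj e
        apply hmin (N + 1 - j + i) (by omega)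
        rw [pow_add, Equiv.Perm.mul_apply, e, ← Equiv.Perm.mul_apply, ← pow_add,
          Nat.sub_add_cancel hj]
        exact hN
      have hb : N + 2 ≤ 24 := by
        have := Fintype.card_le_of_injective (fun i : Fin (N + 2) => (pPerm ht 24 ^ i.1) d) (by
          intro i j hij
          rcases Nat.lt_trichotomy i.1 j.1 with h | h | h
          · exact absurd hij (hrep i j h (by omega))
          · exact Fin.ext h
          · exact absurd hij.symm (hrep j i h (by omega)))
        simpa using this
      obtain ⟨m, hm, hm'⟩ := of_walk ht d 24 (pPerm ht 24 d) N (by omega) h (by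
        rw [← Equiv.Perm.mul_apply, ← pow_succ]; exact hN)
      rw [← Equiv.Perm.mul_apply, ← pow_succ] at hm'
      exact hrep 0 (m + 1) (by omega) (by omega) (Fin.ext (by simpa using hm'.symm))
  · intro h
    apply walk_of ht d 24
    intro n
    rw [← Equiv.Perm.mul_apply, ← pow_succ]
    exact h (n + 1)

lemma nOrb_faces {Γ : Subgroup PSL2Z} {T : ℕ} {l : ℕ → PSL2Z ⧸ Γ} (h : LabG Γ (tab T) l)
    (ht : Tab (tab T)) : nOrb Tp Γ = faces T := by
  rw [faces, countBelow_eq, nOrb]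
  symm
  apply Nat.card_congr
  refine Equiv.ofBijective (fun k => clsT l k.1) ⟨?_, ?_⟩
  · rintro ⟨a, ha, ha'⟩ ⟨b, hb, hb'⟩ hab
    have h1 := (walk_iff ht ⟨a, ha⟩).1 ha'
    have h2 := (walk_iff ht ⟨b, hb⟩).1 hb'
    have h3 := (clsT_eq h ht ⟨a, ha⟩ ⟨b, hb⟩).1 hab
    obtain ⟨i, hi⟩ := h3.exists_nat_pow_eq
    obtain ⟨j, hj⟩ := h3.symm.exists_nat_pow_eq
    have h4 := h1 j
    have h5 := h2 i
    rw [hj] at h4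
    rw [hi] at h5
    have := le_antisymm h4 h5
    exact Subtype.ext (congrArg Fin.val this)
  · intro q
    obtain ⟨z, rfl⟩ := clsT_surj h q
    have hne : ((Finset.univ : Finset (Fin 24)).filter
        (fun w => (pPerm ht 24).SameCycle z w)).Nonempty :=
      ⟨z, Finset.mem_filter.2 ⟨Finset.mem_univ _, Equiv.Perm.SameCycle.refl _ _⟩⟩
    obtain ⟨w, hw, hmin⟩ := Finset.exists_min_image _ id hne
    rw [Finset.mem_filter] at hw
    refine ⟨⟨w.1, w.2, (walk_iff ht w).2 ?_⟩, (clsT_eq h ht _ _).2 hw.2⟩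
    intro n
    refine hmin _ ?_
    rw [Finset.mem_filter]
    refine ⟨Finset.mem_univ _, hw.2.trans ⟨n, ?_⟩⟩
    simp

lemma nFix_loops {Γ : Subgroup PSL2Z} {T : ℕ} {l : ℕ → PSL2Z ⧸ Γ} (h : LabG Γ (tab T) l) :
    nFix Tp Γ = loops T := by
  rw [loops, countBelow_eq, nFix]
  symm
  apply Nat.card_congr
  have key : ∀ k < 24, Nat.beq (pf T k) k = true ↔ Tp • l k = l k := by
    intro k hk
    rw [Nat.beq_eq, pf_eq, Tp_lab h k hk]
    constructor
    · intro e; rw [e]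
    · intro e; exact h.inj _ (h.lt _ (u0_lt k hk)) _ hk e
  refine Equiv.ofBijective (fun k => ⟨l k.1, (key k.1 k.2.1).1 k.2.2⟩) ⟨?_, ?_⟩
  · rintro ⟨a, ha, ha'⟩ ⟨b, hb, hb'⟩ hab
    exact Subtype.ext (h.inj _ ha _ hb (congrArg Subtype.val hab))
  · rintro ⟨x, hx⟩
    obtain ⟨i, hi, rfl⟩ := h.surj x
    exact ⟨⟨i, hi, (key i hi).2 hx⟩, rfl⟩

/-! ### Soundness of the list -/

def canonGo (T : ℕ) (fuel : ℕ) : ℕ → ℕ → Bool :=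
  Nat.rec (motive := fun _ => ℕ → ℕ → Bool) (fun _ k => Nat.beq k 8)
    (fun _ ih x k => force (Nat.pred (dig T x)) fun y =>
      and (Nat.ble (Nat.succ x) (Nat.mul 3 k)) (and (Nat.ble y (Nat.mul 3 k))
        (Bool.rec (motive := fun _ => Bool) (ih (Nat.succ x) k) (ih (Nat.succ x) (Nat.succ k))
          (Nat.beq y (Nat.mul 3 k))))) fuel

lemma canonGo_succ (T f x k : ℕ) : canonGo T (f + 1) x k =
    and (Nat.ble (x + 1) (3 * k)) (and (Nat.ble (tab T x) (3 * k))
      (if tab T x = 3 * k then canonGo T f (x + 1) (k + 1) else canonGo T f (x + 1) k)) := by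
  show (force (Nat.pred (dig T x)) fun y =>
      and (Nat.ble (Nat.succ x) (Nat.mul 3 k)) (and (Nat.ble y (Nat.mul 3 k))
        (Bool.rec (motive := fun _ => Bool) (canonGo T f (Nat.succ x) k)
          (canonGo T f (Nat.succ x) (Nat.succ k))
          (Nat.beq y (Nat.mul 3 k))))) = _
  simp only [force_eq, brec_beq]
  rfl

lemma canonGo_spec (T f : ℕ) : ∀ x, x + f = 24 → canonGo T f x (Kf (tab T) x) = true →
    (∀ y, x ≤ y → y < 24 → y < 3 * Kf (tab T) y ∧ tab T y ≤ 3 * Kf (tab T) y) ∧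
      Kf (tab T) 24 = 8 := by
  induction f with
  | zero =>
    intro x hx h
    have hx' : x = 24 := by omega
    subst hx'
    exact ⟨fun y _ _ => by omega, Nat.eq_of_beq_eq_true h⟩
  | succ f ih =>
    intro x hx h
    rw [canonGo_succ, Bool.and_eq_true, Bool.and_eq_true] at h
    obtain ⟨h1, h2, h3⟩ := h
    have h1' := Nat.le_of_ble_eq_true h1
    have h2' := Nat.le_of_ble_eq_true h2
    have h4 : canonGo T f (x + 1) (Kf (tab T) (x + 1)) = true := by
      rw [Kf]
      split_ifs at h3 ⊢ <;> exact h3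
    obtain ⟨h5, h6⟩ := ih (x + 1) (by omega) h4
    refine ⟨fun y hy hy' => ?_, h6⟩
    rcases Nat.eq_or_lt_of_le hy with e | e
    · subst e; exact ⟨by omega, h2'⟩
    · exact h5 y e hy'

def tabOk (T z : ℕ) : Bool :=
  and (Nat.ble 1 (dig T z)) (and (Nat.ble (dig T z) 24)
    (and (Nat.beq (Nat.pred (dig T (Nat.pred (dig T z)))) z) (not (Nat.beq (Nat.pred (dig T z)) z))))

def repOk (T : ℕ) : Bool :=
  and (Nat.ble (Nat.succ T) (Nat.pow 32 24)) (and (allBelow (tabOk T) 24)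
    (and (canonGo T 24 0 1) (and (isMin T) (Nat.beq (faces T) 6))))

lemma rep_all : repList.all repOk = true := by decide +kernel

structure RepOk (T : ℕ) : Prop where
  lt : T < 32 ^ 24
  dig : ∀ z < 24, dig T z = tab T z + 1
  tab : Tab (tab T)
  canon : Canon (_root_.tab T)
  min : isMin T = true
  faces : faces T = 6

lemma rep_ok (T : ℕ) (hT : T ∈ repList) : RepOk T := by
  have h := List.all_eq_true.1 rep_all T hT
  simp only [repOk, Bool.and_eq_true] at h
  obtain ⟨h1, h2, h3, h4, h5⟩ := h
  rw [allBelow_iff] at h2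
  have h2' : ∀ z < 24, 1 ≤ dig T z ∧ dig T z ≤ 24 ∧ tab T (tab T z) = z ∧ tab T z ≠ z := by
    intro z hz
    have := h2 z hz
    simp only [tabOk, Bool.and_eq_true, Bool.not_eq_true'] at this
    obtain ⟨a, b, c, d⟩ := this
    exact ⟨Nat.le_of_ble_eq_true a, Nat.le_of_ble_eq_true b, Nat.eq_of_beq_eq_true c,
      Nat.ne_of_beq_eq_false d⟩
  refine ⟨Nat.le_of_ble_eq_true h1, ?_, ⟨?_, ?_, ?_⟩, ?_, h4, Nat.eq_of_beq_eq_true h5⟩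
  · intro z hz
    have := (h2' z hz).1
    unfold tab; omega
  · intro z hz
    have := h2' z hz
    unfold tab; omega
  · intro z hz; exact (h2' z hz).2.2.1
  · intro z hz; exact (h2' z hz).2.2.2
  · obtain ⟨a, b⟩ := canonGo_spec T 24 0 rfl h3
    exact ⟨fun x hx => a x (Nat.zero_le _) hx, b⟩

lemma rep_nodup : repList.Nodup := by decide +kernel

theorem exists_group {t : ℕ → ℕ} (ht : Tab t) (hc : Canon t) :
    ∃ (Γ : Subgroup PSL2Z) (l : ℕ → PSL2Z ⧸ Γ), LabG Γ t l := by
  obtain ⟨F, hF1, hF2⟩ := exists_hom (sPerm ht 24) uPerm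
    (by ext1 z; exact sFun_inv ht 24 z)
    (by ext1 z; exact Fin.ext (u0_cube z z.2))
  have hs : ∀ z : Fin 24, (F Sp z).1 = t z := by
    intro z
    rw [hF1, sPerm_apply, if_pos (Or.inl z.2)]; rfl
  have hu : ∀ z : Fin 24, (F Up z).1 = u0 z := by
    intro z
    rw [hF2]; rfl
  have hreach : ∀ x ≤ 24, ∀ j < 3 * Kf t x, ∃ g : PSL2Z, (F g 0).1 = j := by
    have hblock : ∀ k < 8, (∃ g : PSL2Z, (F g 0).1 = 3 * k) →
        ∀ j, 3 * k ≤ j → j < 3 * k + 3 → ∃ g : PSL2Z, (F g 0).1 = j := by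
      rintro k hk ⟨g, hg⟩ j h1 h2
      have e1 : (F (Up * g) 0).1 = 3 * k + 1 := by
        rw [map_mul, Equiv.Perm.mul_apply, hu, hg, u0_a k hk]
      have e2 : (F (Up * (Up * g)) 0).1 = 3 * k + 2 := by
        rw [map_mul, Equiv.Perm.mul_apply, hu, e1, u0_b k hk]
      rcases (by omega : j = 3 * k ∨ j = 3 * k + 1 ∨ j = 3 * k + 2) with e | e | e
      · exact ⟨g, by rw [hg, e]⟩
      · exact ⟨_, by rw [e1, e]⟩
      · exact ⟨_, by rw [e2, e]⟩
    intro x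
    induction x with
    | zero =>
      intro _ j hj
      rw [Kf] at hj
      exact hblock 0 (by omega) ⟨1, by simp⟩ j (by omega) (by omega)
    | succ x ih =>
      intro hx j hj
      by_cases h1 : j < 3 * Kf t x
      · exact ih (by omega) j h1
      · have hk := hc.K_le hx
        rw [Kf] at hj hk
        split_ifs at hj hk with e
        · refine hblock (Kf t x) (by omega) ?_ j (by omega) (by omega)
          obtain ⟨g, hg⟩ := ih (by omega) x (hc.1 x (by omega)).1
          refine ⟨Sp * g, ?_⟩
          rw [map_mul, Equiv.Perm.mul_apply, hs, hg, e]
        · omega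
  have hreach' : ∀ j : ℕ, ∃ g : PSL2Z, j < 24 → (F g 0).1 = j := by
    intro j
    by_cases hj : j < 24
    · obtain ⟨g, hg⟩ := hreach 24 le_rfl j (by rw [hc.2]; omega)
      exact ⟨g, fun _ => hg⟩
    · exact ⟨1, fun h => absurd h hj⟩
  choose g hg using hreach'
  have hmk : ∀ a b : PSL2Z, (QuotientGroup.mk a : PSL2Z ⧸ (MulAction.stabilizer
      (Equiv.Perm (Fin 24)) (0 : Fin 24)).comap F) = QuotientGroup.mk b ↔ (F a 0).1 = (F b 0).1 := by
    intro a b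
    rw [QuotientGroup.eq, Subgroup.mem_comap, MulAction.mem_stabilizer_iff, map_mul, map_inv,
      mul_smul, inv_smul_eq_iff]
    exact ⟨fun h => (congrArg Fin.val h).symm, fun h => Fin.ext h.symm⟩
  refine ⟨(MulAction.stabilizer (Equiv.Perm (Fin 24)) (0 : Fin 24)).comap F,
    fun i => QuotientGroup.mk (g i), ht.lt, ?_, ?_, ?_, ?_⟩
  · intro i hi j hj h
    rw [hmk, hg i hi, hg j hj] at h
    exact h
  · intro x
    obtain ⟨a, rfl⟩ := QuotientGroup.mk_surjective x
    exact ⟨(F a 0).1, (F a 0).2, (hmk _ _).2 (hg _ (F a 0).2)⟩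
  · intro i hi
    refine (hmk _ (Up * g i)).2 ?_
    rw [hg _ (u0_lt i hi), map_mul, Equiv.Perm.mul_apply, hu, hg i hi]
  · intro i hi
    refine (hmk _ (Sp * g i)).2 ?_
    rw [hg _ (ht.lt i hi), map_mul, Equiv.Perm.mul_apply, hs, hg i hi]

/-! ### Conjugacy classes -/

def LabT (Γ : Subgroup PSL2Z) (T : ℕ) : Prop := ∃ l : ℕ → PSL2Z ⧸ Γ, LabG Γ (tab T) l

def Base (Γ : Subgroup PSL2Z) : Prop := Γ.index = 24 ∧ GenusZero Γ ∧ TorsionFree Γ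

lemma dat_of (Γ : Subgroup PSL2Z) (hi : Γ.index = 24) (hs : ∀ x : PSL2Z ⧸ Γ, Sp • x ≠ x)
    (hu : ∀ x : PSL2Z ⧸ Γ, Up • x ≠ x) :
    Dat (fun x : PSL2Z ⧸ Γ => Sp • x) (fun x : PSL2Z ⧸ Γ => Up • x) where
  ss x := by show Sp • Sp • x = x; rw [smul_smul, Sp_sq, one_smul]
  uuu x := by show Up • Up • Up • x = x; rw [smul_smul, smul_smul, Up_cube, one_smul]
  sne := hs
  une := hu
  card := hi
  conn P x0 h0 h1 h2 x := by
    have key : ∀ g : PSL2Z, ∀ x : PSL2Z ⧸ Γ, P x ↔ P (g • x) := by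
      intro g
      have hg : g ∈ Subgroup.closure {Sp, Up} := by rw [closure_Sp_Up]; trivial
      induction hg using Subgroup.closure_induction with
      | mem g hg =>
        rcases hg with rfl | hg
        · refine fun x => ⟨h1 x, fun h => ?_⟩
          have := h1 _ h
          simp only [smul_smul, Sp_sq, one_smul] at this
          exact this
        · have : g = Up := hg
          subst this
          refine fun x => ⟨h2 x, fun h => ?_⟩
          have := h2 _ (h2 _ h)
          simp only [smul_smul, ← mul_assoc, Up_cube, one_smul] at this
          exact this
      | one => intro x; rw [one_smul]
      | mul a b _ _ ha hb => intro x; rw [hb x, ha (b • x), mul_smul]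
      | inv a _ ha => intro x; rw [ha (a⁻¹ • x), smul_inv_smul]
    obtain ⟨g, rfl⟩ := MulAction.exists_smul_eq PSL2Z x0 x
    exact (key g x0).1 h0

theorem base_rep (Γ : Subgroup PSL2Z) (h : Base Γ) : ∃ T ∈ repList, LabT Γ T := by
  obtain ⟨hi, hg, htf⟩ := h
  obtain ⟨hs, hu⟩ := (torsionFree_iff Γ).1 htf
  have h6 := (genus_iff Γ hi hs hu).1 hg
  have hD := dat_of Γ hi hs hu
  obtain ⟨t, l, hl, hc, hmin⟩ := exists_min hD
  have ht := hl.tab hD.ss hD.sne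
  obtain ⟨T, hT, hd⟩ := rep_of_canon ht hc (Wf_card hl ht h6) hmin
  have e : ∀ i < 24, tab T i = t i := by
    intro i hi
    unfold tab; rw [hd i hi]; rfl
  refine ⟨T, hT, l, ?_, hl.inj, hl.surj, hl.hu, ?_⟩
  · intro i hi; rw [e i hi]; exact hl.lt i hi
  · intro i hi; rw [e i hi]; exact hl.hs i hi

theorem rep_base (Γ : Subgroup PSL2Z) (T : ℕ) (hT : T ∈ repList) (h : LabT Γ T) :
    Base Γ ∧ nFix Tp Γ = loops T := by
  obtain ⟨l, hl⟩ := h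
  have ok := rep_ok T hT
  have hs : ∀ x : PSL2Z ⧸ Γ, Sp • x ≠ x := by
    intro x e
    obtain ⟨i, hi, rfl⟩ := hl.surj x
    have := hl.hs i hi
    exact ok.tab.ne i hi (hl.inj _ (hl.lt i hi) _ hi (this.trans e))
  have hu : ∀ x : PSL2Z ⧸ Γ, Up • x ≠ x := by
    intro x e
    obtain ⟨i, hi, rfl⟩ := hl.surj x
    have := hl.hu i hi
    have h1 := hl.inj _ (u0_lt i hi) _ hi (this.trans e)
    rw [u0_eq i hi] at h1
    split_ifs at h1 <;> omega
  have hi : Γ.index = 24 := by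
    have h1 := card_of_surj 24 l hl.surj
    have h2 : Finite (PSL2Z ⧸ Γ) := by
      apply Finite.of_surjective (fun i : Fin 24 => l i)
      intro x
      obtain ⟨i, hi, e⟩ := hl.surj x
      exact ⟨⟨i, hi⟩, e⟩
    have h3 := card_of_inj 24 l hl.inj
    exact le_antisymm h1 h3
  refine ⟨⟨hi, ?_, (torsionFree_iff Γ).2 ⟨hs, hu⟩⟩, nFix_loops hl⟩
  rw [genus_iff Γ hi hs hu, nOrb_faces hl ok.tab, ok.faces]

theorem rep_unique (Γ : Subgroup PSL2Z) (T T' : ℕ) (hT : T ∈ repList) (hT' : T' ∈ repList)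
    (h : LabT Γ T) (h' : LabT Γ T') : T = T' := by
  obtain ⟨l, hl⟩ := h
  obtain ⟨l', hl'⟩ := h'
  have ok := rep_ok T hT
  have ok' := rep_ok T' hT'
  have h1 := isMin_le hl hl' ok'.canon ok.dig ok.min
  have h2 := isMin_le hl' hl ok.canon ok'.dig ok'.min
  apply dig_ext T T' 24 ok.lt ok'.lt
  intro i hi
  rw [ok.dig i hi, ok'.dig i hi, Llt.total h2 h1 i hi]

lemma subgroupConj_iff {G : Type*} [Group G] (H K : Subgroup G) :
    SubgroupConj H K ↔ ∃ g : G, ∀ x, x ∈ H ↔ g * x * g⁻¹ ∈ K := by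
  constructor
  · rintro ⟨g, rfl⟩
    refine ⟨g, fun x => ⟨fun hx => ⟨x, hx, rfl⟩, ?_⟩⟩
    rintro ⟨y, hy, e⟩
    have e' : g * y * g⁻¹ = g * x * g⁻¹ := e
    have : y = x := by simpa using e'
    exact this ▸ hy
  · rintro ⟨g, hg⟩
    refine ⟨g, ?_⟩
    ext y
    constructor
    · rintro ⟨x, hx, rfl⟩
      exact (hg x).1 hx
    · intro hy
      refine ⟨g⁻¹ * y * g, (hg _).2 (by simpa [mul_assoc] using hy), ?_⟩
      show g * (g⁻¹ * y * g) * g⁻¹ = y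
      group

lemma subgroupConj_symm {G : Type*} [Group G] {H K : Subgroup G} (h : SubgroupConj H K) :
    SubgroupConj K H := by
  rw [subgroupConj_iff] at h ⊢
  obtain ⟨g, hg⟩ := h
  refine ⟨g⁻¹, fun x => ?_⟩
  rw [hg]
  simp [mul_assoc]

theorem conj_of_lab (Γ Γ' : Subgroup PSL2Z) (T : ℕ) (h : LabT Γ T) (h' : LabT Γ' T) :
    SubgroupConj Γ Γ' := by
  obtain ⟨l, hl⟩ := h
  obtain ⟨l', hl'⟩ := h'
  have key : ∀ g : PSL2Z, ∀ i < 24, ∀ j < 24, g • l i = l j ↔ g • l' i = l' j := by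
    intro g
    have hg : g ∈ Subgroup.closure {Sp, Up} := by rw [closure_Sp_Up]; trivial
    have heq : ∀ i < 24, ∀ j < 24, l i = l j ↔ l' i = l' j := by
      intro i hi j hj
      exact ⟨fun e => by rw [hl.inj i hi j hj e], fun e => by rw [hl'.inj i hi j hj e]⟩
    induction hg using Subgroup.closure_induction with
    | mem g hg =>
      intro i hi j hj
      rcases hg with rfl | hg
      · rw [show Sp • l i = _ from (hl.hs i hi).symm, show Sp • l' i = _ from (hl'.hs i hi).symm]
        exact heq _ (hl.lt i hi) _ hj
      · have : g = Up := hg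
        subst this
        rw [show Up • l i = _ from (hl.hu i hi).symm, show Up • l' i = _ from (hl'.hu i hi).symm]
        exact heq _ (u0_lt i hi) _ hj
    | one => intro i hi j hj; rw [one_smul, one_smul]; exact heq i hi j hj
    | mul a b _ _ ha hb =>
      intro i hi j hj
      obtain ⟨k, hk, e⟩ := hl.surj (b • l i)
      have e' := (hb i hi k hk).1 e.symm
      rw [mul_smul, mul_smul, ← e, e', ha k hk j hj]
    | inv a _ ha =>
      intro i hi j hj
      rw [inv_smul_eq_iff, inv_smul_eq_iff, eq_comm, ha j hj i hi, eq_comm]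
  obtain ⟨i, hi, e⟩ := hl.surj (QuotientGroup.mk 1)
  obtain ⟨a, ha⟩ := QuotientGroup.mk_surjective (l' i)
  rw [subgroupConj_iff]
  refine ⟨a⁻¹, fun x => ?_⟩
  have h1 := key x i hi i hi
  rw [e, ← ha] at h1
  have h2 : x • (QuotientGroup.mk 1 : PSL2Z ⧸ Γ) = QuotientGroup.mk 1 ↔ x ∈ Γ := by
    show (QuotientGroup.mk (x * 1) : PSL2Z ⧸ Γ) = QuotientGroup.mk 1 ↔ x ∈ Γ
    rw [eq_comm, QuotientGroup.eq]; simp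
  have h3 : x • (QuotientGroup.mk a : PSL2Z ⧸ Γ') = QuotientGroup.mk a ↔ a⁻¹ * x * a⁻¹⁻¹ ∈ Γ' := by
    show (QuotientGroup.mk (x * a) : PSL2Z ⧸ Γ') = QuotientGroup.mk a ↔ _
    rw [eq_comm, QuotientGroup.eq, inv_inv, mul_assoc]
  rw [← h2, h1, h3]

theorem lab_of_conj (Γ Γ' : Subgroup PSL2Z) (T : ℕ) (hc : SubgroupConj Γ Γ') (h : LabT Γ T) :
    LabT Γ' T := by
  obtain ⟨l, hl⟩ := h
  rw [subgroupConj_iff] at hc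
  obtain ⟨g, hg⟩ := hc
  have hmk : ∀ a b : PSL2Z, (QuotientGroup.mk (a * g⁻¹) : PSL2Z ⧸ Γ') = QuotientGroup.mk (b * g⁻¹) ↔
      (QuotientGroup.mk a : PSL2Z ⧸ Γ) = QuotientGroup.mk b := by
    intro a b
    rw [QuotientGroup.eq, QuotientGroup.eq, hg]
    simp [mul_assoc]
  have hrep : ∀ i, ∃ a : PSL2Z, QuotientGroup.mk a = l i :=
    fun i => QuotientGroup.mk_surjective (l i)
  choose a ha using hrep
  refine ⟨fun i => QuotientGroup.mk (a i * g⁻¹), hl.lt, ?_, ?_, ?_, ?_⟩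
  · intro i hi j hj e
    rw [hmk, ha, ha] at e
    exact hl.inj i hi j hj e
  · intro x
    obtain ⟨b, rfl⟩ := QuotientGroup.mk_surjective x
    obtain ⟨i, hi, e⟩ := hl.surj (QuotientGroup.mk (b * g))
    refine ⟨i, hi, ?_⟩
    have := (hmk (a i) (b * g)).2 ((ha i).trans e)
    simpa [mul_assoc] using this
  · intro i hi
    show _ = (QuotientGroup.mk (Up * (a i * g⁻¹)) : PSL2Z ⧸ Γ')
    rw [← mul_assoc, hmk, ha, hl.hu i hi, ← ha i]
    rfl
  · intro i hi
    show _ = (QuotientGroup.mk (Sp * (a i * g⁻¹)) : PSL2Z ⧸ Γ')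
    rw [← mul_assoc, hmk, ha, hl.hs i hi, ← ha i]
    rfl

theorem count_eq (P : Subgroup PSL2Z → Prop) (q : ℕ → Bool)
    (hP : ∀ Γ, P Γ ↔ Base Γ ∧ q (nFix Tp Γ) = true) :
    countClasses P = (repList.filter (fun T => q (loops T))).length := by
  have hex : ∀ T : {T : ℕ // T ∈ repList.filter (fun T => q (loops T))},
      ∃ Γ : {Γ : Subgroup PSL2Z // P Γ}, LabT Γ.1 T.1 := by
    rintro ⟨T, hT⟩
    rw [List.mem_filter] at hT
    have ok := rep_ok T hT.1
    obtain ⟨Γ, l, hl⟩ := exists_group ok.tab ok.canon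
    obtain ⟨h1, h2⟩ := rep_base Γ T hT.1 ⟨l, hl⟩
    exact ⟨⟨Γ, (hP Γ).2 ⟨h1, by rw [h2]; exact hT.2⟩⟩, ⟨l, hl⟩⟩
  choose G hG using hex
  have hbij : Function.Bijective (fun T => Quot.mk
      (fun A B : {Γ : Subgroup PSL2Z // P Γ} => SubgroupConj A.1 B.1) (G T)) := by
    constructor
    · intro T T' e
      have hinv := congrArg (Quot.lift (fun A : {Γ : Subgroup PSL2Z // P Γ} => LabT A.1 T.1)
        (fun A B hAB => propext ⟨lab_of_conj _ _ _ hAB, lab_of_conj _ _ _ (subgroupConj_symm hAB)⟩)) e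
      have h1 : LabT (G T').1 T.1 := by
        have : LabT (G T).1 T.1 = LabT (G T').1 T.1 := hinv
        rw [← this]; exact hG T
      exact Subtype.ext (rep_unique _ _ _ (List.mem_filter.1 T.2).1 (List.mem_filter.1 T'.2).1
        h1 (hG T'))
    · intro A
      induction A using Quot.ind with
      | mk A =>
        obtain ⟨h1, h2⟩ := (hP A.1).1 A.2
        obtain ⟨T, hT, hl⟩ := base_rep A.1 h1
        have h3 := (rep_base A.1 T hT hl).2
        have hmem : T ∈ repList.filter (fun T => q (loops T)) := by
          rw [List.mem_filter]
          exact ⟨hT, by rw [← h3]; exact h2⟩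
        exact ⟨⟨T, hmem⟩, Quot.sound (conj_of_lab _ _ T (hG ⟨T, hmem⟩) hl)⟩
  unfold countClasses
  rw [← Nat.card_congr (Equiv.ofBijective _ hbij),
    ← List.toFinset_card_of_nodup (rep_nodup.filter (fun T => q (loops T)))]
  exact Nat.subtype_card _ (fun x => List.mem_toFinset)

lemma count_loops (i n : ℕ) (h : (repList.filter (fun T => Nat.beq (loops T) i)).length = n) :
    countClasses (fun Γ => (Γ.index = 24 ∧ GenusZero Γ ∧ TorsionFree Γ) ∧ nFix Tp Γ = i) = n := by
  rw [← h]
  exact count_eq _ (fun m => Nat.beq m i) (fun Γ => by rw [Nat.beq_eq]; rfl)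

lemma count_all : countClasses (fun Γ => Γ.index = 24 ∧ GenusZero Γ ∧ TorsionFree Γ) = 191 := by
  rw [count_eq _ (fun _ => true) (fun Γ => by simp [Base])]
  decide +kernel

/-- Among the 191 conjugacy classes of torsion-free genus-zero index-24 subgroups of
`PSL(2,ℤ)`, classified by the number of `T`-fixed cosets (loops of the dessin):
exactly 20 have none, 45 have one, 71 have two, 40 have three, 14 have four, and 1 has
five. -/
theorem count_index24_by_loops :
    countClasses (fun Γ => Γ.index = 24 ∧ GenusZero Γ ∧ TorsionFree Γ) = 191 ∧
    countClasses (fun Γ => (Γ.index = 24 ∧ GenusZero Γ ∧ TorsionFree Γ) ∧ nFix Tp Γ = 0) = 20 ∧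
    countClasses (fun Γ => (Γ.index = 24 ∧ GenusZero Γ ∧ TorsionFree Γ) ∧ nFix Tp Γ = 1) = 45 ∧
    countClasses (fun Γ => (Γ.index = 24 ∧ GenusZero Γ ∧ TorsionFree Γ) ∧ nFix Tp Γ = 2) = 71 ∧
    countClasses (fun Γ => (Γ.index = 24 ∧ GenusZero Γ ∧ TorsionFree Γ) ∧ nFix Tp Γ = 3) = 40 ∧
    countClasses (fun Γ => (Γ.index = 24 ∧ GenusZero Γ ∧ TorsionFree Γ) ∧ nFix Tp Γ = 4) = 14 ∧
    countClasses (fun Γ => (Γ.index = 24 ∧ GenusZero Γ ∧ TorsionFree Γ) ∧ nFix Tp Γ = 5) = 1 := by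
  exact ⟨count_all, count_loops 0 20 (by decide +kernel), count_loops 1 45 (by decide +kernel),
    count_loops 2 71 (by decide +kernel), count_loops 3 40 (by decide +kernel),
    count_loops 4 14 (by decide +kernel), count_loops 5 1 (by decide +kernel)⟩
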